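/- arXiv:2112.13053 — 2 statements merged into one kernel-verified Lean document; each statement's English description precedes it below -/
import Mathlib

section
/- Let ξ and η be jointly stationary and ergodic random measures on ℝ^d with ξ diffuse and 0 < λ_ξ = λ_η < ∞. Then there exists an allocation balancing ξ and η provided one of the following holds: (a) η has a non-zero discrete component; (b) η is diffuse and there exists an auxiliary simple point process χ (a non-zero simple point process with finite intensity, jointly stationary and ergodic with ξ and η). -/
/-!
Both measures are cut into pieces attached to the points of a simple point process and the pieces
are matched by a transport between the points.

A simple point process `χ` is available: in case (b) it is given, and in case (a) it consists of
the locations of the atoms of `η` of mass at least `1 / n` for a suitable `n`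
(`exists_atom_process`). A measurable rule by which every location selects a point of `χ` partitions
space into cells, one per point. Let `a` and `b` be the `ξ`-mass and the `η`-mass of the cell of a
point. By the exchange formula for Palm measures (`palm_exchange`) the means of `a` and `b` under
the Palm measure of `χ` are the intensities of `ξ` and `η`, so they are equal and finite.

The points then ship the supplies `a` to the demands `b`. There are countably many injective
matching rules between points which together cover all ordered pairs of points
(`PointField.exists_partners`), and they are applied one after the other, each shipping as much as
possible. In the end, unsatisfied supply and unsatisfied demand cannot coexist in one
configuration; their means agree by mass transport, and ergodicity forces both to vanish
(`PointField.exists_transport`).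

It remains to realise the transport by a map. Since `ξ` is diffuse, the rank of a location in its
cell carries `ξ` to Lebesgue measure on an interval of length `a` (`map_rank`); and any finite
measure is the image of Lebesgue measure on an interval (`exists_quantile`), which is applied to
`η` on the target cell. The two intervals are cut into slots according to the amounts shipped by
each rule, and each supply slot is translated onto the corresponding demand slot
(`balance_of_slots`).

The equivariance assumed of random measures holds only up to null sets depending on the shift;
`exists_equivariant_version` and `exists_invariant_subset` remove these exceptional sets.
-/

open MeasureTheory ENNReal

noncomputable section

/-- Measurable structure on `Option α`; the point `∞` is modeled by `none`. -/
instance {α : Type*} [MeasurableSpace α] : MeasurableSpace (Option α) :=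
  MeasurableSpace.map some inferInstance

namespace Paper

variable {Ω : Type*} [MeasurableSpace Ω]
variable {G : Type*} [MeasurableSpace G] [TopologicalSpace G] [AddCommGroup G]

/-- A measurable flow `(θ_x)_{x ∈ G}` on `Ω`. -/
structure IsMeasurableFlow (θ : G → Ω → Ω) : Prop where
  measurable : Measurable fun p : G × Ω => θ p.1 p.2
  id_eq : θ 0 = id
  comp : ∀ x y : G, θ x ∘ θ y = θ (x + y)

/-- `P` is stationary under the flow `θ`. -/
def IsStationary (P : Measure Ω) (θ : G → Ω → Ω) : Prop :=
  ∀ x : G, P.map (θ x) = P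

/-- `P` is ergodic under the flow `θ`: invariant events are trivial. -/
def IsErgodicFlow (P : Measure Ω) (θ : G → Ω → Ω) : Prop :=
  ∀ A : Set Ω, MeasurableSet A → (∀ x : G, θ x ⁻¹' A = A) → P A = 0 ∨ P A = 1

/-- A random measure: a measurable kernel which is a.s. locally finite
(finite on compact sets). -/
def IsRandomMeasure (P : Measure Ω) (ξ : Ω → Measure G) : Prop :=
  (∀ s : Set G, MeasurableSet s → Measurable fun ω => ξ ω s) ∧
    ∀ᵐ ω ∂P, ∀ K : Set G, IsCompact K → ξ ω K < ∞

/-- Flow-invariance (`joint stationarity`) of a random measure: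
`ξ(θ_x ω, C − x) = ξ(ω, C)`. -/
def IsFlowInvariant (P : Measure Ω) (θ : G → Ω → Ω) (ξ : Ω → Measure G) : Prop :=
  ∀ x : G, ∀ᵐ ω ∂P, ξ (θ x ω) = (ξ ω).map (fun y => y - x)

/-- A diffuse (non-atomic) random measure. -/
def IsDiffuseRM (P : Measure Ω) (ξ : Ω → Measure G) : Prop :=
  ∀ᵐ ω ∂P, ∀ x : G, ξ ω {x} = 0

/-- A discrete (purely atomic) random measure: a.s. carried by a countable set. -/
def IsDiscreteRM (P : Measure Ω) (ξ : Ω → Measure G) : Prop :=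
  ∀ᵐ ω ∂P, ∃ s : Set G, s.Countable ∧ ξ ω sᶜ = 0

/-- A locally finite set of points. -/
def LocallyFiniteSet (s : Set G) : Prop :=
  ∀ x : G, ∃ U ∈ nhds x, (s ∩ U).Finite

/-- A simple point process: a.s. the counting measure of a locally finite set. -/
def IsSimplePointProcess (P : Measure Ω) (χ : Ω → Measure G) : Prop :=
  ∀ᵐ ω ∂P, ∃ s : Set G, LocallyFiniteSet s ∧ χ ω = Measure.count.restrict s

/-- An allocation: a jointly measurable, translation-equivariant map
`Ω × G → G ∪ {∞}`, where `∞` is modeled by `none`. -/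
def IsAllocation (P : Measure Ω) (θ : G → Ω → Ω) (τ : Ω → G → Option G) : Prop :=
  Measurable (fun p : Ω × G => τ p.1 p.2) ∧
    ∀ᵐ ω ∂P, ∀ x y : G, τ (θ y ω) (x - y) = Option.map (fun z => z - y) (τ ω x)

/-- `τ` balances `ξ` and `η`: a.s. no `ξ`-mass is sent to `∞` and the image of
`ξ(ω)` under `τ(ω, ·)` is `η(ω)`. -/
def Balances (P : Measure Ω) (ξ η : Ω → Measure G) (τ : Ω → G → Option G) : Prop :=
  ∀ᵐ ω ∂P, ξ ω {z | τ ω z = none} = 0 ∧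
    ∀ C : Set G, MeasurableSet C → ξ ω {z | ∃ y ∈ C, τ ω z = some y} = η ω C

/-- Euclidean space `ℝ^d`. -/
abbrev Rd (d : ℕ) := EuclideanSpace ℝ (Fin d)

/-- The unit cube `[0,1]^d`. -/
def unitCube (d : ℕ) : Set (Rd d) := {x | ∀ i, x i ∈ Set.Icc (0 : ℝ) 1}

/-- The intensity `λ_ξ = E ξ([0,1]^d)` of a random measure on `ℝ^d`. -/
def intensity {d : ℕ} (P : Measure Ω) (ξ : Ω → Measure (Rd d)) : ℝ≥0∞ :=
  ∫⁻ ω, ξ ω (unitCube d) ∂P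

section Proof

open ProbabilityTheory Set

/-! ### Equivariant kernels -/

/-- A kernel that is covariant under the flow at every point of `Ω`, not only almost surely:
`κ (θ x ω)` is the measure `κ ω` seen from `x`. -/
def Equivariant {d : ℕ} (θ : Rd d → Ω → Ω) (κ : Kernel Ω (Rd d)) : Prop :=
  ∀ x ω, κ (θ x ω) = (κ ω).map (fun y => y - x)

/-- A kernel that is finite on all balls is s-finite. Uniform bounds, as required of a finite kernel,
are obtained by cutting the space into shells and `X` according to the integer part of the mass of
the shell. -/
lemma isSFiniteKernel_of_ball {X : Type*} [MeasurableSpace X] {d : ℕ} (κ : Kernel X (Rd d))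
    (h : ∀ a (n : ℕ), κ a (Metric.closedBall 0 n) < ∞) : IsSFiniteKernel κ := by
  set D : ℕ → Set (Rd d) := disjointed (fun n : ℕ => Metric.closedBall (0 : Rd d) n) with hD
  have hDm : ∀ n, MeasurableSet (D n) :=
    fun n => MeasurableSet.disjointed (fun n => Metric.isClosed_closedBall.measurableSet) n
  have hDfin : ∀ a n, κ a (D n) < ∞ :=
    fun a n => (measure_mono (disjointed_subset _ n)).trans_lt (h a n)
  have hS : ∀ mn : ℕ × ℕ, MeasurableSet {a | (mn.2 : ℝ≥0∞) ≤ κ a (D mn.1) ∧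
      κ a (D mn.1) < (mn.2 : ℝ≥0∞) + 1} := fun mn =>
    (measurableSet_le measurable_const (κ.measurable_coe (hDm _))).inter
      (measurableSet_lt (κ.measurable_coe (hDm _)) measurable_const)
  classical
  have hfin : ∀ mn : ℕ × ℕ,
      IsFiniteKernel (Kernel.piecewise (hS mn) (κ.restrict (hDm mn.1)) 0) := by
    intro mn
    refine ⟨(mn.2 : ℝ≥0∞) + 1, by simp, fun a => ?_⟩
    rw [Kernel.piecewise_apply]
    split_ifs with ha
    · rw [Kernel.restrict_apply, Measure.restrict_apply_univ]; exact ha.2.le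
    · simp
  have : κ = Kernel.sum fun mn : ℕ × ℕ =>
      Kernel.piecewise (hS mn) (κ.restrict (hDm mn.1)) 0 := by
    ext a s hs
    rw [Kernel.sum_apply' _ _ hs, ENNReal.tsum_prod']
    have h1 : ∀ m, ∑' n, (Kernel.piecewise (hS (m, n)) (κ.restrict (hDm m)) 0) a s
        = κ a (s ∩ D m) := by
      intro m
      obtain ⟨r, hr⟩ : ∃ r : NNReal, (r : ℝ≥0∞) = κ a (D m) :=
        ⟨_, ENNReal.coe_toNNReal (hDfin a m).ne⟩
      have hfl : ∀ n : ℕ, ((n : ℝ≥0∞) ≤ κ a (D m) ∧ κ a (D m) < (n : ℝ≥0∞) + 1) ↔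
          n = ⌊r⌋₊ := by
        intro n
        rw [← hr]
        have e1 : (n : ℝ≥0∞) = ((n : NNReal) : ℝ≥0∞) := by simp
        rw [e1, ← ENNReal.coe_one, ← ENNReal.coe_add, ENNReal.coe_le_coe, ENNReal.coe_lt_coe]
        rw [eq_comm, Nat.floor_eq_iff zero_le]
      rw [tsum_eq_single ⌊r⌋₊]
      · rw [Kernel.piecewise_apply, if_pos, Kernel.restrict_apply, Measure.restrict_apply hs]
        exact (hfl _).2 rfl
      · intro n hn
        rw [Kernel.piecewise_apply, if_neg]
        · simp
        · exact fun hh => hn ((hfl _).1 hh)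
    rw [tsum_congr h1, ← measure_iUnion _ (fun i => hs.inter (hDm i)), ← inter_iUnion,
      iUnion_disjointed, Metric.iUnion_closedBall_nat, inter_univ]
    intro i j hij
    exact (disjoint_disjointed _ hij).mono inter_subset_right inter_subset_right
  rw [this]
  exact Kernel.isSFiniteKernel_sum

/-- Two locally finite measures agree once they agree on the intersections of balls with the sets
of a countable generating algebra, so equality of two kernels is a measurable event. -/
lemma measurableSet_kernel_eq {X : Type*} [MeasurableSpace X] {d : ℕ} (κ ν : Kernel X (Rd d))
    (h : ∀ a (n : ℕ), κ a (Metric.closedBall 0 n) < ∞) :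
    MeasurableSet {a | κ a = ν a} := by
  obtain ⟨b, hbc, hb⟩ := MeasurableSpace.CountablyGenerated.isCountablyGenerated (α := Rd d)
  set S := generateSetAlgebra b with hS
  have hSc : S.Countable := countable_generateSetAlgebra hbc
  have hSg : (inferInstance : MeasurableSpace (Rd d)) = MeasurableSpace.generateFrom S := by
    rw [hS, generateFrom_generateSetAlgebra_eq]; exact hb
  have hSm : ∀ s ∈ S, MeasurableSet s := by
    intro s hs
    have := MeasurableSpace.measurableSet_generateFrom hs
    rwa [← hSg] at this
  have hSalg : IsSetAlgebra S := isSetAlgebra_generateSetAlgebra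
  have : {a | κ a = ν a} = ⋂ s ∈ S, ⋂ n : ℕ,
      {a | κ a (s ∩ Metric.closedBall 0 n) = ν a (s ∩ Metric.closedBall 0 n)} := by
    ext a
    simp only [mem_iInter, mem_ofPred_eq]
    constructor
    · intro hh s _ n; rw [hh]
    · intro hh
      refine Measure.ext_of_generateFrom_of_cover (S := S)
        (T := range fun n : ℕ => Metric.closedBall (0 : Rd d) n) hSg (countable_range _) ?_ ?_ ?_ ?_ ?_
      · intro s hs t ht _
        exact hSalg.inter_mem hs ht
      · rw [sUnion_range, Metric.iUnion_closedBall_nat]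
      · rintro _ ⟨n, rfl⟩; exact (h a n).ne
      · rintro _ ⟨n, rfl⟩ s hs; exact hh s hs n
      · rintro _ ⟨n, rfl⟩
        simpa using hh univ hSalg.univ_mem n
  rw [this]
  refine MeasurableSet.biInter hSc fun s hs => MeasurableSet.iInter fun n => ?_
  have hm := (hSm s hs).inter (Metric.isClosed_closedBall (x := (0 : Rd d)) (ε := n)).measurableSet
  exact measurableSet_eq_fun (κ.measurable_coe hm) (ν.measurable_coe hm)

/-! ### Removal of exceptional null sets -/

section flow
variable {d : ℕ} {θ : Rd d → Ω → Ω}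

lemma IsMeasurableFlow.measurable_apply (h : IsMeasurableFlow θ) (x : Rd d) : Measurable (θ x) :=
  h.measurable.comp (measurable_const.prodMk measurable_id)

lemma IsMeasurableFlow.add_apply (h : IsMeasurableFlow θ) (x y : Rd d) (ω : Ω) :
    θ x (θ y ω) = θ (x + y) ω := congrFun (h.comp x y) ω

lemma IsMeasurableFlow.zero_apply (h : IsMeasurableFlow θ) (ω : Ω) : θ 0 ω = ω :=
  congrFun h.id_eq ω

lemma IsMeasurableFlow.measurable_comp {X : Type*} [MeasurableSpace X] (h : IsMeasurableFlow θ)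
    {f : X → Rd d} {g : X → Ω} (hf : Measurable f) (hg : Measurable g) :
    Measurable fun a => θ (f a) (g a) :=
  h.measurable.comp (hf.prodMk hg)

lemma IsStationary.measurePreserving {P : Measure Ω} (hs : IsStationary P θ)
    (h : IsMeasurableFlow θ) (x : Rd d) : MeasurePreserving (θ x) P P :=
  ⟨h.measurable_apply x, hs x⟩

lemma measurableSet_ae_prod {X Y : Type*} [MeasurableSpace X] [MeasurableSpace Y]
    (μ : Measure Y) [SFinite μ] {S : Set (X × Y)} (hS : MeasurableSet S) :
    MeasurableSet {a | ∀ᵐ y ∂μ, (a, y) ∈ S} := by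
  have : {a | ∀ᵐ y ∂μ, (a, y) ∈ S} = {a | μ (Prod.mk a ⁻¹' Sᶜ) = 0} := by
    ext a; simp only [mem_ofPred_eq, ae_iff]; rfl
  rw [this]
  exact measurable_measure_prodMk_left hS.compl (measurableSet_singleton 0)

/-- An almost sure property that is stable under the flow holds on a measurable, strictly
invariant set of full measure, namely the set of `ω` whose orbit avoids a fixed measurable null set
at Lebesgue-almost every time. -/
lemma exists_invariant_subset (P : Measure Ω) [IsProbabilityMeasure P]
    (hflow : IsMeasurableFlow θ) (hstat : IsStationary P θ) {p : Ω → Prop}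
    (hp : ∀ᵐ ω ∂P, p ω) (hpinv : ∀ x ω, p ω → p (θ x ω)) :
    ∃ S : Set Ω, MeasurableSet S ∧ P Sᶜ = 0 ∧ (∀ x ω, θ x ω ∈ S ↔ ω ∈ S) ∧ ∀ ω ∈ S, p ω := by
  obtain ⟨M, hMsub, hMm, hM0⟩ := exists_measurable_superset_of_null (ae_iff.1 hp)
  have hset : MeasurableSet {q : Ω × Rd d | θ q.2 q.1 ∈ Mᶜ} :=
    (hflow.measurable_comp measurable_snd measurable_fst) hMm.compl
  set S : Set Ω := {ω | ∀ᵐ x ∂(volume : Measure (Rd d)), θ x ω ∈ Mᶜ} with hS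
  have hinv1 : ∀ x ω, ω ∈ S → θ x ω ∈ S := by
    intro x ω hω
    simp only [hS, mem_ofPred_eq] at hω ⊢
    have := (measurePreserving_add_right (volume : Measure (Rd d)) x).quasiMeasurePreserving.ae hω
    filter_upwards [this] with y hy
    rwa [hflow.add_apply]
  refine ⟨S, measurableSet_ae_prod _ hset, ?_, ?_, ?_⟩
  · refine ae_iff.1 ((Measure.ae_ae_comm (μ := P) (ν := (volume : Measure (Rd d)))
      (p := fun ω x => θ x ω ∈ Mᶜ) hset).2 (Filter.Eventually.of_forall fun x => ?_))
    have h0 : ∀ᵐ ω ∂P, ω ∈ Mᶜ := measure_eq_zero_iff_ae_notMem.1 hM0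
    exact (hstat.measurePreserving hflow x).quasiMeasurePreserving.ae h0
  · intro x ω
    refine ⟨fun h => ?_, hinv1 x ω⟩
    have := hinv1 (-x) _ h
    rwa [hflow.add_apply, neg_add_cancel, hflow.zero_apply] at this
  · intro ω hω
    obtain ⟨x, hx⟩ := (show ∀ᵐ x ∂(volume : Measure (Rd d)), θ x ω ∈ Mᶜ from hω).exists
    have h1 : p (θ x ω) := by
      by_contra hc; exact hx (hMsub hc)
    have := hpinv (-x) _ h1
    rwa [hflow.add_apply, neg_add_cancel, hflow.zero_apply] at this

/-- A flow-invariant random measure, whose equivariance may fail on a null set that depends on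
the shift, agrees almost surely with a kernel that is equivariant and locally finite for every `ω`.
The kernel is the Lebesgue-almost sure value of `x ↦ ξ (θ x ω) + x` where this is constant, and `0`
elsewhere. -/
lemma exists_equivariant_version (P : Measure Ω) [IsProbabilityMeasure P]
    (hflow : IsMeasurableFlow θ) (hstat : IsStationary P θ) {ξ : Ω → Measure (Rd d)}
    (hξ : IsRandomMeasure P ξ) (hinv : IsFlowInvariant P θ ξ) :
    ∃ κ : Kernel Ω (Rd d), IsSFiniteKernel κ ∧ Equivariant θ κ ∧ (∀ᵐ ω ∂P, κ ω = ξ ω) ∧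
      ∀ ω (n : ℕ), κ ω (Metric.closedBall 0 n) < ∞ := by
  classical
  have hball : ∀ n : ℕ, MeasurableSet (Metric.closedBall (0 : Rd d) n) :=
    fun n => Metric.isClosed_closedBall.measurableSet
  let k0 : Kernel Ω (Rd d) := ⟨ξ, Measure.measurable_of_measurable_coe _ hξ.1⟩
  have hLm : MeasurableSet {ω | ∀ n : ℕ, k0 ω (Metric.closedBall 0 n) < ∞} := by
    rw [ofPred_forall]
    exact MeasurableSet.iInter fun n =>
      measurableSet_lt (k0.measurable_coe (hball n)) measurable_const
  -- `k1` discards the `ω` at which `ξ ω` is not locally finite.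
  let k1 : Kernel Ω (Rd d) := Kernel.piecewise hLm k0 0
  have hk1fin : ∀ ω (n : ℕ), k1 ω (Metric.closedBall 0 n) < ∞ := by
    intro ω n
    rw [Kernel.piecewise_apply]
    split_ifs with h
    · exact h n
    · simp
  have hk1ae : ∀ᵐ ω ∂P, k1 ω = ξ ω := by
    filter_upwards [hξ.2] with ω hω
    rw [Kernel.piecewise_apply, if_pos]
    · rfl
    · exact fun n => hω _ (isCompact_closedBall _ _)
  have hk1inv : ∀ x, ∀ᵐ ω ∂P, (k1 (θ x ω)).map (fun y => y + x) = k1 ω := by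
    intro x
    filter_upwards [hk1ae, hinv x,
      (hstat.measurePreserving hflow x).quasiMeasurePreserving.ae hk1ae] with ω h1 h2 h3
    rw [h1, h3, h2, Measure.map_map (by fun_prop) (by fun_prop)]
    convert Measure.map_id
    ext1 z; simp
  have := isSFiniteKernel_of_ball k1 hk1fin
  have hσm : Measurable fun q : Ω × Rd d => (k1 (θ q.2 q.1)).map (fun y => y + q.2) := by
    refine Measure.measurable_of_measurable_coe _ fun C hC => ?_
    have hθ : Measurable fun q : Ω × Rd d => θ q.2 q.1 :=
      hflow.measurable_comp measurable_snd measurable_fst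
    have hset : MeasurableSet {r : (Ω × Rd d) × Rd d | r.2 + r.1.2 ∈ C} :=
      (by fun_prop : Measurable fun r : (Ω × Rd d) × Rd d => r.2 + r.1.2) hC
    have := Kernel.measurable_kernel_prodMk_left (κ := k1.comap _ hθ) hset
    convert this using 1
    ext q
    rw [Kernel.comap_apply, Measure.map_apply (by fun_prop) hC]
    rfl
  let σ : Kernel (Ω × Rd d) (Rd d) := ⟨_, hσm⟩
  have hσapp : ∀ ω x, σ (ω, x) = (k1 (θ x ω)).map (fun y => y + x) := fun ω x => rfl
  have hσfin : ∀ q (n : ℕ), σ q (Metric.closedBall 0 n) < ∞ := by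
    rintro ⟨ω, x⟩ n
    rw [hσapp, Measure.map_apply (by fun_prop) (hball n)]
    obtain ⟨m, hm⟩ := exists_nat_ge (n + ‖x‖)
    refine (measure_mono fun y hy => ?_).trans_lt (hk1fin (θ x ω) m)
    simp only [mem_preimage, Metric.mem_closedBall, dist_zero_right] at hy ⊢
    calc ‖y‖ = ‖(y + x) - x‖ := by simp
      _ ≤ ‖y + x‖ + ‖x‖ := norm_sub_le _ _
      _ ≤ n + ‖x‖ := by gcongr
      _ ≤ m := hm
  have hσshift : ∀ ω x y, σ (θ y ω, x) = (σ (ω, x + y)).map (fun z => z - y) := by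
    intro ω x y
    rw [hσapp, hσapp, hflow.add_apply, Measure.map_map (by fun_prop) (by fun_prop)]
    congr 1
    ext1 z; simp only [Function.comp]; abel
  -- Averaging `x ↦ σ (ω, x)` over a probability measure equivalent to Lebesgue measure selects
  -- the almost sure value measurably.
  let γ : Measure (Rd d) := (volume : Measure (Rd d)).toFinite
  have hγae : ae γ = ae (volume : Measure (Rd d)) := ae_toFinite
  have hσm' : ∀ ω, Measurable fun x => σ (ω, x) := fun ω => σ.measurable.comp (by fun_prop)
  let M : Kernel Ω (Rd d) := ⟨fun ω => γ.bind fun x => σ (ω, x), by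
    refine Measure.measurable_of_measurable_coe _ fun C hC => ?_
    have h1 : ∀ ω, (γ.bind fun x => σ (ω, x)) C = ∫⁻ x, σ (ω, x) C ∂γ := fun ω =>
      Measure.bind_apply hC (hσm' ω).aemeasurable
    simp_rw [h1]
    exact (σ.measurable_coe hC).lintegral_prod_right'⟩
  have hMapp : ∀ ω, M ω = γ.bind fun x => σ (ω, x) := fun ω => rfl
  have hMeq : ∀ ω (μ : Measure (Rd d)), (∀ᵐ x ∂(volume : Measure (Rd d)), σ (ω, x) = μ) →
      M ω = μ := by
    intro ω μ h
    ext C hC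
    rw [hMapp, Measure.bind_apply hC (hσm' ω).aemeasurable]
    have h' : ∀ᵐ x ∂γ, σ (ω, x) C = μ C := by
      rw [← hγae] at h
      filter_upwards [h] with x hx using by rw [hx]
    rw [lintegral_congr_ae h']
    simp [γ]
  let MM : Kernel (Ω × Rd d) (Rd d) := M.comap Prod.fst measurable_fst
  have hEq : MeasurableSet {q : Ω × Rd d | σ q = MM q} := measurableSet_kernel_eq _ _ hσfin
  have hΩ0 : MeasurableSet {ω | ∀ᵐ x ∂(volume : Measure (Rd d)), σ (ω, x) = M ω} :=
    measurableSet_ae_prod _ hEq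
  set Ω0 := {ω | ∀ᵐ x ∂(volume : Measure (Rd d)), σ (ω, x) = M ω} with hΩset
  have hshift : ∀ y ω, ω ∈ Ω0 → θ y ω ∈ Ω0 ∧ M (θ y ω) = (M ω).map (fun z => z - y) := by
    intro y ω hω
    have h1 : ∀ᵐ x ∂(volume : Measure (Rd d)), σ (θ y ω, x) = (M ω).map (fun z => z - y) := by
      have := (measurePreserving_add_right (volume : Measure (Rd d)) y).quasiMeasurePreserving.ae hω
      filter_upwards [this] with x hx
      rw [hσshift, hx]
    have h2 := hMeq _ _ h1
    refine ⟨?_, h2⟩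
    simp only [hΩset, mem_ofPred_eq, h2]
    exact h1
  let κ : Kernel Ω (Rd d) := Kernel.piecewise hΩ0 M 0
  have hκfin : ∀ ω (n : ℕ), κ ω (Metric.closedBall 0 n) < ∞ := by
    intro ω n
    rw [Kernel.piecewise_apply]
    split_ifs with h
    · obtain ⟨x, hx⟩ :=
        (show ∀ᵐ x ∂(volume : Measure (Rd d)), σ (ω, x) = M ω from h).exists
      rw [← hx]; exact hσfin _ n
    · simp
  refine ⟨κ, isSFiniteKernel_of_ball κ hκfin, ?_, ?_, hκfin⟩
  · intro x ω
    rw [Kernel.piecewise_apply, Kernel.piecewise_apply]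
    by_cases h : ω ∈ Ω0
    · rw [if_pos h, if_pos (hshift x ω h).1, (hshift x ω h).2]
    · rw [if_neg h, if_neg]
      · simp
      · intro h'
        have := (hshift (-x) _ h').1
        rw [hflow.add_apply, neg_add_cancel, hflow.zero_apply] at this
        exact h this
  · have h1 : ∀ᵐ ω ∂P, ∀ᵐ x ∂(volume : Measure (Rd d)), σ (ω, x) = k1 ω := by
      have hms : MeasurableSet {q : Ω × Rd d | σ q = k1.comap Prod.fst measurable_fst q} :=
        measurableSet_kernel_eq _ _ hσfin
      exact (Measure.ae_ae_comm (μ := P) (ν := (volume : Measure (Rd d)))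
        (p := fun ω x => σ (ω, x) = k1 ω) hms).2 (Filter.Eventually.of_forall hk1inv)
    filter_upwards [h1, hk1ae] with ω h2 h3
    have h4 := hMeq _ _ h2
    rw [Kernel.piecewise_apply, if_pos, h4, h3]
    simp only [hΩset, mem_ofPred_eq, h4]; exact h2

end flow

/-! ### Palm measures -/

section palm
variable {d : ℕ} {θ : Rd d → Ω → Ω}

lemma measurableSet_unitCube : MeasurableSet (unitCube d) := by
  have : unitCube d = ⋂ i, (fun x : Rd d => x i) ⁻¹' Icc (0 : ℝ) 1 := by
    ext x; simp [unitCube]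
  rw [this]
  exact MeasurableSet.iInter fun i => (by fun_prop : Measurable fun x : Rd d => x i) measurableSet_Icc

/-- The volume is the one induced by the Euclidean norm; the unit cube has mass one for it. -/
lemma volume_unitCube : volume (unitCube d) = 1 := by
  have h := (EuclideanSpace.volume_preserving_symm_measurableEquiv_toLp (Fin d)).measure_preimage_equiv
    (Icc (0 : Fin d → ℝ) 1)
  rw [Real.volume_Icc_pi] at h
  simp only [Pi.one_apply, Pi.zero_apply, sub_zero, ENNReal.ofReal_one, Finset.prod_const_one] at h
  rw [← h]
  congr 1
  ext x
  simp [unitCube, Pi.le_def, forall_and]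

/-- The Palm measure of `κ` under `P`: the mean over the points `x` of `κ ω` in the unit cube
of the Dirac mass at `θ x ω`. It is not normalised, and its total mass is the intensity of `κ`. -/
def palm (P : Measure Ω) (θ : Rd d → Ω → Ω) (κ : Kernel Ω (Rd d)) : Measure Ω :=
  ((P ⊗ₘ κ).restrict (univ ×ˢ unitCube d)).map (fun q => θ q.2 q.1)

variable {P : Measure Ω} [IsProbabilityMeasure P]

/-- Campbell formula, for test functions of the shifted configuration only. -/
lemma lintegral_palm (hflow : IsMeasurableFlow θ) (κ : Kernel Ω (Rd d)) [IsSFiniteKernel κ]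
    {h : Ω → ℝ≥0∞} (hh : Measurable h) :
    ∫⁻ ω, h ω ∂palm P θ κ = ∫⁻ ω, ∫⁻ x in unitCube d, h (θ x ω) ∂κ ω ∂P := by
  have hθ : Measurable fun q : Ω × Rd d => θ q.2 q.1 :=
    hflow.measurable_comp measurable_snd measurable_fst
  rw [palm, lintegral_map hh hθ,
    Measure.setLIntegral_compProd (f := fun q => h (θ q.2 q.1)) (hh.comp hθ) MeasurableSet.univ
      measurableSet_unitCube]
  simp

lemma palm_univ (hflow : IsMeasurableFlow θ) (κ : Kernel Ω (Rd d)) [IsSFiniteKernel κ] :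
    palm P θ κ univ = ∫⁻ ω, κ ω (unitCube d) ∂P := by
  have := lintegral_palm (P := P) hflow κ (h := fun _ => 1) measurable_const
  simpa using this

lemma lintegral_shift (κ : Kernel Ω (Rd d)) (hκ : Equivariant θ κ)
    {f : Rd d → ℝ≥0∞} (hf : Measurable f) (x : Rd d) (ω : Ω) :
    ∫⁻ y, f y ∂κ (θ x ω) = ∫⁻ y, f (y - x) ∂κ ω := by
  rw [hκ, lintegral_map hf (by fun_prop)]

/-- Neveu's exchange formula between the Palm measures of two equivariant kernels. Both sides are
integrals of the diagonally invariant function `F (θ x ω, y - x)`, one over pairs with `x` in the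
unit cube and the other over pairs with `y` in the unit cube. -/
lemma palm_exchange (hflow : IsMeasurableFlow θ) (hstat : IsStationary P θ)
    (κ ν : Kernel Ω (Rd d)) [IsSFiniteKernel κ] [IsSFiniteKernel ν]
    (hκ : Equivariant θ κ) (hν : Equivariant θ ν) {F : Ω × Rd d → ℝ≥0∞} (hF : Measurable F) :
    ∫⁻ ω, ∫⁻ w, F (ω, w) ∂ν ω ∂palm P θ κ =
      ∫⁻ ω, ∫⁻ w, F (θ w ω, -w) ∂κ ω ∂palm P θ ν := by
  set B := unitCube d
  have hB : MeasurableSet B := measurableSet_unitCube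
  set b : Rd d → ℝ≥0∞ := B.indicator 1 with hb
  have hbm : Measurable b := measurable_one.indicator hB
  have hb1 : ∀ y, ∫⁻ s, b (y - s) = 1 := by
    intro y
    rw [lintegral_sub_left_eq_self (fun s => b s) y, hb, lintegral_indicator_one hB,
      volume_unitCube]
  have hb2 : ∀ x, ∫⁻ s, b (x + s) = 1 := by
    intro y
    rw [lintegral_add_left_eq_self (fun s => b s) y, hb, lintegral_indicator_one hB,
      volume_unitCube]
  have hθ : Measurable fun q : Ω × Rd d × Rd d => θ q.2.1 q.1 :=
    hflow.measurable_comp (by fun_prop) (by fun_prop)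
  set G : Ω × Rd d × Rd d → ℝ≥0∞ := fun q => F (θ q.2.1 q.1, q.2.2 - q.2.1) with hG
  have hGm : Measurable G := hF.comp (hθ.prodMk (by fun_prop))
  set Λ : Measure (Ω × Rd d × Rd d) := P ⊗ₘ (κ ×ₖ ν) with hΛ
  have hΛint : ∀ h : Ω × Rd d × Rd d → ℝ≥0∞, Measurable h →
      ∫⁻ q, h q ∂Λ = ∫⁻ ω, ∫⁻ x, ∫⁻ y, h (ω, x, y) ∂ν ω ∂κ ω ∂P := by
    intro h hh
    rw [hΛ, Measure.lintegral_compProd hh]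
    congr 1; ext ω
    rw [Kernel.prod_apply, lintegral_prod _ (by fun_prop)]
  have hΛint' : ∀ h : Ω × Rd d × Rd d → ℝ≥0∞, Measurable h →
      ∫⁻ q, h q ∂Λ = ∫⁻ ω, ∫⁻ y, ∫⁻ x, h (ω, x, y) ∂κ ω ∂ν ω ∂P := by
    intro h hh
    rw [hΛ, Measure.lintegral_compProd hh]
    congr 1; ext ω
    rw [Kernel.prod_apply, lintegral_prod_symm _ (by fun_prop)]
  have hinv : ∀ (s : Rd d) (h : Ω × Rd d × Rd d → ℝ≥0∞), Measurable h →
      ∫⁻ q, h (θ s q.1, q.2.1 - s, q.2.2 - s) ∂Λ = ∫⁻ q, h q ∂Λ := by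
    intro s h hh
    have hθs := hflow.measurable_apply s
    rw [hΛint _ (by fun_prop), hΛint _ hh]
    rw [← (hstat.measurePreserving hflow s).lintegral_comp
      (f := fun ω => ∫⁻ x, ∫⁻ y, h (ω, x, y) ∂ν ω ∂κ ω)]
    · congr 1; ext ω
      rw [lintegral_shift κ hκ (f := fun x => ∫⁻ y, h (θ s ω, x, y) ∂ν (θ s ω))]
      · congr 1; ext x
        rw [lintegral_shift ν hν (by fun_prop)]
      · exact Measurable.lintegral_prod_right' (f := fun r : Rd d × Rd d => h (θ s ω, r.1, r.2))
          (by fun_prop)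
    · have : Measurable fun q : Ω × Rd d => ∫⁻ y, h (q.1, q.2, y) ∂ν q.1 :=
        Measurable.lintegral_kernel_prod_right' (κ := ν.comap Prod.fst measurable_fst)
          (f := fun r : (Ω × Rd d) × Rd d => h (r.1.1, r.1.2, r.2)) (by fun_prop)
      exact this.lintegral_kernel_prod_right'
  have hL : ∫⁻ ω, ∫⁻ w, F (ω, w) ∂ν ω ∂palm P θ κ = ∫⁻ q, b q.2.1 * G q ∂Λ := by
    rw [lintegral_palm hflow κ hF.lintegral_kernel_prod_right', hΛint _ (by fun_prop)]
    congr 1; ext ω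
    rw [← lintegral_indicator hB]
    congr 1; ext x
    show _ = ∫⁻ y, b x * G (ω, x, y) ∂ν ω
    rw [lintegral_const_mul _ (by fun_prop)]
    by_cases hx : x ∈ B
    · simp only [hx, indicator_of_mem, hb, hG, Pi.one_apply, one_mul]
      rw [lintegral_shift ν hν (by fun_prop)]
    · simp [hx, hb]
  have hR : ∫⁻ ω, ∫⁻ w, F (θ w ω, -w) ∂κ ω ∂palm P θ ν = ∫⁻ q, b q.2.2 * G q ∂Λ := by
    have hF' : Measurable fun r : Ω × Rd d => F (θ r.2 r.1, -r.2) :=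
      hF.comp ((hflow.measurable_comp measurable_snd measurable_fst).prodMk (by fun_prop))
    rw [lintegral_palm hflow ν hF'.lintegral_kernel_prod_right', hΛint' _ (by fun_prop)]
    congr 1; ext ω
    rw [← lintegral_indicator hB]
    congr 1; ext y
    show _ = ∫⁻ x, b y * G (ω, x, y) ∂κ ω
    rw [lintegral_const_mul _ (by fun_prop)]
    by_cases hy : y ∈ B
    · simp only [hy, indicator_of_mem, hb, hG, Pi.one_apply, one_mul]
      rw [lintegral_shift κ hκ (f := fun w => F (θ w (θ y ω), -w))
        (hF'.comp (measurable_const.prodMk measurable_id))]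
      congr 1; ext x
      rw [hflow.add_apply]; simp
    · simp [hy, hb]
  have hGinv : ∀ s q, G (θ s q.1, q.2.1 - s, q.2.2 - s) = G q := by
    intro s q; simp [hG, hflow.add_apply]
  rw [hL, hR]
  -- A factor `1 = ∫ b (y - s) ds` is inserted, the configuration is shifted by `s`, and the
  -- factor `∫ b (x + s) ds = 1` is integrated out.
  calc ∫⁻ q, b q.2.1 * G q ∂Λ
      = ∫⁻ q, (∫⁻ s, b q.2.1 * G q * b (q.2.2 - s) ∂volume) ∂Λ := by
        congr 1; ext q
        rw [lintegral_const_mul _ (by fun_prop), hb1, mul_one]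
    _ = ∫⁻ s, ∫⁻ q, b q.2.1 * G q * b (q.2.2 - s) ∂Λ := by
        rw [lintegral_lintegral_swap]
        fun_prop
    _ = ∫⁻ s, ∫⁻ q, b q.2.2 * G q * b (q.2.1 + s) ∂Λ := by
        congr 1; ext s
        rw [← hinv s (fun q => b q.2.2 * G q * b (q.2.1 + s)) (by fun_prop)]
        congr 1; ext q
        rw [hGinv]
        simp only [sub_add_cancel]
        ring
    _ = ∫⁻ q, (∫⁻ s, b q.2.2 * G q * b (q.2.1 + s) ∂volume) ∂Λ := by
        rw [lintegral_lintegral_swap]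
        fun_prop
    _ = ∫⁻ q, b q.2.2 * G q ∂Λ := by
        congr 1; ext q
        rw [lintegral_const_mul _ (by fun_prop), hb2, mul_one]

/-- A null event for the Palm measure of `κ` is almost surely not seen from `κ`-almost any point. -/
lemma ae_of_palm_null (hflow : IsMeasurableFlow θ) (hstat : IsStationary P θ)
    (κ : Kernel Ω (Rd d)) [IsSFiniteKernel κ] (hκ : Equivariant θ κ) {N : Set Ω}
    (hN : MeasurableSet N) (h0 : palm P θ κ N = 0) :
    ∀ᵐ ω ∂P, κ ω {w | θ w ω ∈ N} = 0 := by
  -- The Palm measure of Lebesgue measure is `P` itself.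
  let ν : Kernel Ω (Rd d) := Kernel.const Ω volume
  have hν : Equivariant θ ν := by
    intro x ω
    simp only [ν, Kernel.const_apply]
    exact (measurePreserving_sub_right volume x).map_eq.symm
  have hθ : Measurable fun q : Ω × Rd d => θ q.2 q.1 :=
    hflow.measurable_comp measurable_snd measurable_fst
  have hF : Measurable fun q : Ω × Rd d => N.indicator (1 : Ω → ℝ≥0∞) q.1 :=
    (measurable_one.indicator hN).comp measurable_fst
  have h := palm_exchange (P := P) hflow hstat κ ν hκ hν hF
  have hl : ∫⁻ ω, ∫⁻ w, N.indicator (1 : Ω → ℝ≥0∞) ω ∂ν ω ∂palm P θ κ = 0 := by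
    rw [lintegral_eq_zero_iff hF.lintegral_kernel_prod_right']
    filter_upwards [measure_eq_zero_iff_ae_notMem.1 h0] with ω hω
    simp [hω]
  rw [hl] at h
  have hmeas : Measurable fun ω => κ ω {w | θ w ω ∈ N} :=
    Kernel.measurable_kernel_prodMk_left (κ := κ) (hθ hN)
  have h2 : ∀ ω, ∫⁻ w, N.indicator (1 : Ω → ℝ≥0∞) (θ w ω) ∂κ ω = κ ω {w | θ w ω ∈ N} := by
    intro ω
    have hm : MeasurableSet {w | θ w ω ∈ N} := (hθ.comp measurable_prodMk_left) hN
    rw [← lintegral_indicator_one hm]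
    rfl
  simp only [h2] at h
  have h3 : palm P θ ν = P := by
    ext A hA
    rw [← lintegral_indicator_one hA, lintegral_palm hflow ν (measurable_one.indicator hA)]
    simp only [ν, Kernel.const_apply]
    rw [lintegral_lintegral_swap]
    · have : ∀ x : Rd d, ∫⁻ ω, A.indicator (1 : Ω → ℝ≥0∞) (θ x ω) ∂P = P A := by
        intro x
        rw [(hstat.measurePreserving hflow x).lintegral_comp (measurable_one.indicator hA),
          lintegral_indicator_one hA]
      simp [this, volume_unitCube]
    · exact ((measurable_one.indicator hA).comp hθ).aemeasurable
  rw [h3, eq_comm, lintegral_eq_zero_iff hmeas] at h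
  exact h

end palm

/-! ### Simple point processes -/

section field
variable {d : ℕ}

lemma LocallyFiniteSet.countable {s : Set (Rd d)} (h : LocallyFiniteSet s) : s.Countable := by
  choose U hU hfin using h
  obtain ⟨c, hc, hcu⟩ := TopologicalSpace.countable_cover_nhds hU
  have : s ⊆ ⋃ x ∈ c, s ∩ U x := by
    intro y hy
    have : y ∈ ⋃ x ∈ c, U x := hcu ▸ mem_univ y
    simp only [mem_iUnion, mem_inter_iff] at this ⊢
    obtain ⟨x, hx, hyx⟩ := this
    exact ⟨x, hx, hy, hyx⟩
  exact (hc.biUnion fun x _ => (hfin x).countable).mono this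

lemma LocallyFiniteSet.isolated {s : Set (Rd d)} (h : LocallyFiniteSet s) (x : Rd d) :
    ∃ ε > 0, ∀ y ∈ s, dist y x < ε → y = x := by
  obtain ⟨U, hU, hfin⟩ := h x
  have h1 : ((s ∩ U) \ {x})ᶜ ∈ nhds x :=
    (hfin.subset sdiff_subset).isClosed.isOpen_compl.mem_nhds (by simp)
  obtain ⟨ε, hε, hsub⟩ := Metric.mem_nhds_iff.1 (Filter.inter_mem hU h1)
  refine ⟨ε, hε, fun y hy hd => ?_⟩
  have := hsub (Metric.mem_ball.2 hd)
  by_contra hne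
  exact this.2 ⟨⟨hy, this.1⟩, hne⟩

/-- An enumeration of a countable base of balls, indexed by pairs (centre, radius). -/
def window (d k : ℕ) : Set (Rd d) :=
  Metric.ball (TopologicalSpace.denseSeq (Rd d) k.unpair.1) (1 / ((k.unpair.2 : ℝ) + 1))

lemma measurableSet_window (k : ℕ) : MeasurableSet (window d k) := Metric.isOpen_ball.measurableSet

lemma exists_window (x : Rd d) {ε : ℝ} (hε : 0 < ε) :
    ∃ k, x ∈ window d k ∧ ∀ y ∈ window d k, dist y x < ε := by
  obtain ⟨n, hn⟩ := exists_nat_one_div_lt (half_pos hε)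
  obtain ⟨m, hm⟩ := (TopologicalSpace.denseRange_denseSeq (Rd d)).exists_dist_lt x
    (Nat.one_div_pos_of_nat (α := ℝ) (n := n))
  refine ⟨Nat.pair m n, ?_, ?_⟩
  · simpa [window] using hm
  · intro y hy
    simp only [window, Nat.unpair_pair, Metric.mem_ball] at hy
    have := dist_triangle_right y x (TopologicalSpace.denseSeq (Rd d) m)
    linarith

/-- A nowhere vanishing simple point process: `χ ω` counts the points of the non-empty locally
finite set `s ω`, and is equivariant. All properties hold for every `ω`. Measurability of `s` is
encoded by `χ` being a kernel. -/
structure PointField (θ : Rd d → Ω → Ω) (χ : Kernel Ω (Rd d)) (s : Ω → Set (Rd d)) : Prop where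
  flow : IsMeasurableFlow θ
  equi : Equivariant θ χ
  sfin : IsSFiniteKernel χ
  eq_count : ∀ ω, χ ω = Measure.count.restrict (s ω)
  locFin : ∀ ω, LocallyFiniteSet (s ω)
  nonempty : ∀ ω, (s ω).Nonempty

namespace PointField
variable {θ : Rd d → Ω → Ω} {χ : Kernel Ω (Rd d)} {s : Ω → Set (Rd d)}

lemma countable (h : PointField θ χ s) (ω : Ω) : (s ω).Countable := (h.locFin ω).countable

lemma apply_eq (h : PointField θ χ s) (ω : Ω) {A : Set (Rd d)} (hA : MeasurableSet A) :
    χ ω A = (A ∩ s ω).encard := by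
  rw [h.eq_count, Measure.restrict_apply hA, Measure.count_apply
    (hA.inter (h.countable ω).measurableSet)]

lemma apply_singleton (h : PointField θ χ s) {ω : Ω} {x : Rd d} (hx : x ∈ s ω) : χ ω {x} = 1 := by
  rw [h.apply_eq ω (measurableSet_singleton x), inter_eq_left.2 (by simpa using hx)]
  simp

lemma ae_of_mem (h : PointField θ χ s) (ω : Ω) {A : Set (Rd d)} (hA : χ ω A = 0) {x : Rd d}
    (hx : x ∈ s ω) : x ∉ A := by
  intro hxA
  have := measure_mono_null (singleton_subset_iff.2 hxA) hA
  rw [h.apply_singleton hx] at this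
  exact one_ne_zero this

lemma apply_eq_zero (h : PointField θ χ s) (ω : Ω) {A : Set (Rd d)} (hA : ∀ x ∈ s ω, x ∉ A) :
    χ ω A = 0 := by
  rw [h.eq_count]
  refine measure_mono_null (t := (s ω)ᶜ) (fun x hx hs => hA x hs hx) ?_
  rw [Measure.restrict_apply (h.countable ω).measurableSet.compl]; simp

lemma mem_iff (h : PointField θ χ s) (ω : Ω) (x : Rd d) : x ∈ s ω ↔ χ ω {x} ≠ 0 := by
  constructor
  · intro hx; rw [h.apply_singleton hx]; exact one_ne_zero
  · intro hx; by_contra hn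
    exact hx (h.apply_eq_zero ω fun y hy hyx => hn (by simpa using hyx ▸ hy))

lemma mem_shift (h : PointField θ χ s) (ω : Ω) (x y : Rd d) : y ∈ s (θ x ω) ↔ y + x ∈ s ω := by
  rw [h.mem_iff, h.mem_iff, h.equi, Measure.map_apply (by fun_prop) (measurableSet_singleton _)]
  have : (fun z => z - x) ⁻¹' {y} = {y + x} := by ext z; simp [sub_eq_iff_eq_add]
  rw [this]

lemma lintegral_eq (h : PointField θ χ s) (ω : Ω) (f : Rd d → ℝ≥0∞) :
    ∫⁻ x, f x ∂χ ω = ∑' x : s ω, f x := by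
  rw [h.eq_count, lintegral_countable _ (h.countable ω)]
  simp

/-- The point of `χ ω` in the `k`-th window when there is exactly one, written as an integral so
that it depends measurably on `ω`; a junk value otherwise. -/
def pt (χ : Kernel Ω (Rd d)) (k : ℕ) (ω : Ω) : Rd d := ∫ y in window d k, y ∂χ ω

lemma measurable_pt (h : PointField θ χ s) (k : ℕ) : Measurable (pt χ k) := by
  have := h.sfin
  have := (MeasureTheory.StronglyMeasurable.integral_kernel_prod_right
    (κ := χ.restrict (measurableSet_window (d := d) k))
    (f := fun _ y => y) measurable_snd.stronglyMeasurable).measurable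
  simp only [Kernel.restrict_apply] at this
  exact this

lemma inter_eq_pt (h : PointField θ χ s) {k : ℕ} {ω : Ω} (hk : χ ω (window d k) = 1) :
    window d k ∩ s ω = {pt χ k ω} := by
  rw [h.apply_eq ω (measurableSet_window k)] at hk
  have hk' : (window d k ∩ s ω).encard = 1 := by exact_mod_cast hk
  obtain ⟨x, hx⟩ := encard_eq_one.1 hk'
  rw [hx, pt, h.eq_count, Measure.restrict_restrict (measurableSet_window k), hx]
  simp

/-- Every point of the process is the only one in some arbitrarily small window. -/
lemma exists_isolating (h : PointField θ χ s) {ω : Ω} {x : Rd d} (hx : x ∈ s ω) {ε : ℝ}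
    (hε : 0 < ε) : ∃ k, χ ω (window d k) = 1 ∧ pt χ k ω = x ∧ ∀ y ∈ window d k, dist y x < ε := by
  obtain ⟨δ, hδ, hiso⟩ := (h.locFin ω).isolated x
  obtain ⟨k, hxk, hk⟩ := exists_window x (lt_min hδ hε)
  have h1 : window d k ∩ s ω = {x} := by
    ext y; constructor
    · exact fun hy => hiso y hy.2 ((hk y hy.1).trans_le (min_le_left _ _))
    · rintro rfl; exact ⟨hxk, hx⟩
  have h2 : χ ω (window d k) = 1 := by
    rw [h.apply_eq ω (measurableSet_window k), h1]; simp
  refine ⟨k, h2, ?_, fun y hy => (hk y hy).trans_le (min_le_right _ _)⟩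
  have := h.inter_eq_pt h2
  rw [h1] at this
  exact (singleton_eq_singleton_iff.1 this).symm

/-- A point of the process can be selected measurably. -/
lemma exists_root (h : PointField θ χ s) : ∃ π : Ω → Rd d, Measurable π ∧ ∀ ω, π ω ∈ s ω := by
  classical
  have hex : ∀ ω, ∃ k, χ ω (window d k) = 1 := fun ω => by
    obtain ⟨x, hx⟩ := h.nonempty ω
    obtain ⟨k, hk, -⟩ := h.exists_isolating hx one_pos
    exact ⟨k, hk⟩
  refine ⟨fun ω => pt χ (Nat.find (hex ω)) ω, ?_, fun ω => ?_⟩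
  · exact Measurable.find (p := fun k ω => χ ω (window d k) = 1) (fun k => h.measurable_pt k)
      (fun k => χ.measurable_coe (measurableSet_window k) (measurableSet_singleton 1)) hex
  · have := h.inter_eq_pt (Nat.find_spec (hex ω))
    exact (this.symm.subset rfl).2

/-- Countably many measurable rules `p k`, with domains `D k`, by which a point of the process seen
from the origin picks another point. Each rule is injective on the points in its domain, and every
ordered pair of points is matched by some rule. Rule `k` requires the `k`-th window around the
source to contain the target only, and the reflected window around the target to contain the source
only. -/
lemma exists_partners (h : PointField θ χ s) : ∃ (p : ℕ → Ω → Rd d) (D : ℕ → Set Ω),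
    (∀ k, Measurable (p k)) ∧ (∀ k, MeasurableSet (D k)) ∧
    (∀ k, ∀ ω ∈ D k, p k ω ∈ s ω) ∧
    (∀ k ω, ∀ y ∈ s ω, ∀ y' ∈ s ω, θ y ω ∈ D k → θ y' ω ∈ D k →
      p k (θ y ω) + y = p k (θ y' ω) + y' → y = y') ∧
    (∀ ω, 0 ∈ s ω → ∀ x ∈ s ω, ∃ k, ω ∈ D k ∧ p k ω = x) := by
  have hneg : ∀ k, MeasurableSet ((fun x : Rd d => -x) ⁻¹' window d k) := fun k =>
    measurable_neg (measurableSet_window k)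
  have hθ : ∀ k, Measurable fun ω => θ (pt χ k ω) ω := fun k =>
    h.flow.measurable_comp (h.measurable_pt k) measurable_id
  refine ⟨pt χ, fun k => {ω | χ ω (window d k) = 1} ∩
    {ω | χ (θ (pt χ k ω) ω) ((fun x : Rd d => -x) ⁻¹' window d k) = 1}, h.measurable_pt,
    fun k => ?_, fun k ω hω => ?_, fun k ω y hy y' hy' hD hD' he => ?_, fun ω h0 x hx => ?_⟩
  · exact (χ.measurable_coe (measurableSet_window k) (measurableSet_singleton 1)).inter
      (((χ.measurable_coe (hneg k)).comp (hθ k)) (measurableSet_singleton 1))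
  · exact ((h.inter_eq_pt hω.1).symm.subset rfl).2
  · have key : ∀ z ∈ s ω, θ z ω ∈ {ω | χ ω (window d k) = 1} →
        z - (pt χ k (θ z ω) + z) ∈ (fun x : Rd d => -x) ⁻¹' window d k ∩
          s (θ (pt χ k (θ z ω) + z) ω) := by
      intro z hz hz1
      refine ⟨?_, ?_⟩
      · have := ((h.inter_eq_pt hz1).symm.subset rfl).1
        simpa using this
      · rw [h.mem_shift]; simpa using hz
    have k1 := key y hy hD.1
    have k2 := key y' hy' hD'.1
    have k3 : χ (θ (pt χ k (θ y ω)) (θ y ω)) ((fun x : Rd d => -x) ⁻¹' window d k) = 1 := hD.2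
    rw [h.flow.add_apply, h.apply_eq _ (hneg k)] at k3
    have k3' : ((fun x : Rd d => -x) ⁻¹' window d k ∩
      s (θ (pt χ k (θ y ω) + y) ω)).encard = 1 := by exact_mod_cast k3
    obtain ⟨c, hc⟩ := encard_eq_one.1 k3'
    rw [← he] at k2
    rw [hc] at k1 k2
    exact sub_left_injective (k1.trans k2.symm)
  · obtain ⟨δ, hδ, hiso⟩ := (h.locFin ω).isolated 0
    obtain ⟨k, hk, hpt, hsmall⟩ := h.exists_isolating hx hδ
    refine ⟨k, ⟨hk, ?_⟩, hpt⟩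
    show χ (θ (pt χ k ω) ω) _ = 1
    rw [hpt, h.apply_eq _ (hneg k)]
    have : (fun x : Rd d => -x) ⁻¹' window d k ∩ s (θ x ω) = {-x} := by
      ext w; constructor
      · rintro ⟨hw1, hw2⟩
        rw [h.mem_shift] at hw2
        have h3 := hsmall _ hw1
        have h4 : w + x = 0 := hiso _ hw2 (by
          rw [dist_eq_norm] at h3 ⊢
          have h5 : -w - x = -(w + x - 0) := by abel
          rw [h5, norm_neg] at h3
          exact h3)
        exact eq_neg_of_add_eq_zero_left h4
      · rintro rfl
        refine ⟨?_, ?_⟩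
        · have := ((h.inter_eq_pt hk).symm.subset rfl).1
          simpa [hpt] using this
        · rw [h.mem_shift]; simpa using h0
    rw [this]; simp

end PointField
end field

/-! ### Greedy transport between points -/

namespace PointField
variable {d : ℕ} {θ : Rd d → Ω → Ω} {χ : Kernel Ω (Rd d)} {s : Ω → Set (Rd d)}

/-- The mass arriving at the origin when every point `w` of the process sends the mass
`t (θ w ω)` to the point `w + p (θ w ω)`. -/
def received (θ : Rd d → Ω → Ω) (χ : Kernel Ω (Rd d)) (p : Ω → Rd d) (t : Ω → ℝ≥0∞)
    (ω : Ω) : ℝ≥0∞ :=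
  ∫⁻ w, {q : Ω × Rd d | p q.1 = q.2}.indicator (fun q => t q.1) (θ w ω, -w) ∂χ ω

lemma measurable_received_integrand {p : Ω → Rd d} {t : Ω → ℝ≥0∞}
    (hp : Measurable p) (ht : Measurable t) :
    Measurable ({q : Ω × Rd d | p q.1 = q.2}.indicator (fun q => t q.1)) :=
  (ht.comp measurable_fst).indicator
    (measurableSet_eq_fun (hp.comp measurable_fst) measurable_snd)

lemma measurable_received (h : PointField θ χ s) {p : Ω → Rd d} {t : Ω → ℝ≥0∞}
    (hp : Measurable p) (ht : Measurable t) : Measurable (received θ χ p t) := by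
  have := h.sfin
  have h1 : Measurable fun r : Ω × Rd d => (θ r.2 r.1, -r.2) :=
    (h.flow.measurable_comp measurable_snd measurable_fst).prodMk (by fun_prop)
  exact Measurable.lintegral_kernel_prod_right' (κ := χ)
    ((measurable_received_integrand hp ht).comp h1)

lemma received_eq (h : PointField θ χ s) {p : Ω → Rd d} {t : Ω → ℝ≥0∞} {ω : Ω} {y : Rd d}
    (hy : y ∈ s ω) (hyp : p (θ y ω) = -y)
    (huniq : ∀ w ∈ s ω, t (θ w ω) ≠ 0 → p (θ w ω) = -w → w = y) :
    received θ χ p t ω = t (θ y ω) := by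
  rw [received, h.lintegral_eq, tsum_eq_single ⟨y, hy⟩]
  · simp [hyp]
  · rintro ⟨w, hw⟩ hne
    by_cases hpw : p (θ w ω) = -w
    · by_cases h0 : t (θ w ω) = 0
      · simp [h0]
      · exact absurd (Subtype.ext (huniq w hw h0 hpw)) hne
    · simp [hpw]

lemma received_eq_zero (h : PointField θ χ s) {p : Ω → Rd d} {t : Ω → ℝ≥0∞} {ω : Ω}
    (hn : ∀ w ∈ s ω, p (θ w ω) = -w → t (θ w ω) = 0) :
    received θ χ p t ω = 0 := by
  rw [received, h.lintegral_eq, ENNReal.tsum_eq_zero]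
  rintro ⟨w, hw⟩
  by_cases hpw : p (θ w ω) = -w
  · simp [hn w hw hpw]
  · simp [hpw]

/-- Mass transport principle: the mean mass sent equals the mean mass received. -/
lemma lintegral_received (h : PointField θ χ s) {P : Measure Ω} [IsProbabilityMeasure P]
    (hstat : IsStationary P θ) {p : Ω → Rd d} {t : Ω → ℝ≥0∞}
    (hp : Measurable p) (ht : Measurable t) (hs : ∀ ω, t ω ≠ 0 → p ω ∈ s ω) :
    ∫⁻ ω, t ω ∂palm P θ χ = ∫⁻ ω, received θ χ p t ω ∂palm P θ χ := by
  have := h.sfin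
  have key := palm_exchange h.flow hstat χ χ h.equi h.equi (measurable_received_integrand hp ht)
  unfold received
  rw [← key]
  congr 1; ext ω
  by_cases h0 : t ω = 0
  · simp [h0, Set.indicator]
  · rw [h.lintegral_eq, tsum_eq_single ⟨p ω, hs ω h0⟩]
    · simp
    · rintro ⟨w, hw⟩ hne
      have : p ω ≠ w := fun he => hne (Subtype.ext he.symm)
      simp [this]

/-- The remaining supply and demand, seen from a point at the origin, after `k` rounds of the greedy
transport from `a` to `b`: in round `k` each point in the domain of rule `k` sends to its partner
as much as its own supply and the demand of the partner permit. -/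
def greedy (θ : Rd d → Ω → Ω) (χ : Kernel Ω (Rd d)) (p : ℕ → Ω → Rd d) (D : ℕ → Set Ω)
    (a b : Ω → ℝ≥0∞) : ℕ → (Ω → ℝ≥0∞) × (Ω → ℝ≥0∞)
  | 0 => (a, b)
  | k + 1 =>
    let st := greedy θ χ p D a b k
    let t := (D k).indicator fun ω => min (st.1 ω) (st.2 (θ (p k ω) ω))
    (fun ω => st.1 ω - t ω, fun ω => st.2 ω - received θ χ (p k) t ω)

/-- Two mass functions on a point process with equal finite Palm means can be transported into
each other in countably many rounds, in each of which every point sends mass to at most one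
point and receives mass from at most one point. -/
lemma exists_transport (h : PointField θ χ s) {P : Measure Ω} [IsProbabilityMeasure P]
    (hstat : IsStationary P θ) (herg : IsErgodicFlow P θ) {a b : Ω → ℝ≥0∞}
    (ha : Measurable a) (hb : Measurable b)
    (hab : ∫⁻ ω, a ω ∂palm P θ χ = ∫⁻ ω, b ω ∂palm P θ χ)
    (hfin : ∫⁻ ω, a ω ∂palm P θ χ ≠ ∞) :
    ∃ (p : ℕ → Ω → Rd d) (t : ℕ → Ω → ℝ≥0∞),
      (∀ k, Measurable (p k)) ∧ (∀ k, Measurable (t k)) ∧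
      (∀ k ω, t k ω ≠ 0 → p k ω ∈ s ω) ∧
      (∀ k ω, ∀ y ∈ s ω, ∀ y' ∈ s ω, t k (θ y ω) ≠ 0 → t k (θ y' ω) ≠ 0 →
        p k (θ y ω) + y = p k (θ y' ω) + y' → y = y') ∧
      (∀ᵐ ω ∂P, ∀ y ∈ s ω, a (θ y ω) ≠ ∞ ∧ b (θ y ω) ≠ ∞ ∧
        ∑' k, t k (θ y ω) = a (θ y ω) ∧
        ∑' k, received θ χ (p k) (t k) (θ y ω) = b (θ y ω)) := by
  have := h.sfin
  obtain ⟨p, D, hp, hD, hps, hinj, hcompl⟩ := h.exists_partners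
  set g := greedy θ χ p D a b with hg
  set t : ℕ → Ω → ℝ≥0∞ := fun k =>
    (D k).indicator fun ω => min ((g k).1 ω) ((g k).2 (θ (p k ω) ω)) with ht
  set r : ℕ → Ω → ℝ≥0∞ := fun k => received θ χ (p k) (t k) with hr
  have g1 : ∀ k ω, (g (k+1)).1 ω = (g k).1 ω - t k ω := fun k ω => rfl
  have g2 : ∀ k ω, (g (k+1)).2 ω = (g k).2 ω - r k ω := fun k ω => rfl
  have hθp : ∀ k, Measurable fun ω => θ (p k ω) ω := fun k =>
    h.flow.measurable_comp (hp k) measurable_id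
  have htm' : ∀ k, Measurable (g k).1 → Measurable (g k).2 → Measurable (t k) := fun k h1 h2 =>
    (h1.min (h2.comp (hθp k))).indicator (hD k)
  have hgm : ∀ k, Measurable (g k).1 ∧ Measurable (g k).2 := by
    intro k
    induction k with
    | zero => exact ⟨ha, hb⟩
    | succ k ih =>
      exact ⟨ih.1.sub (htm' k ih.1 ih.2),
        ih.2.sub (h.measurable_received (hp k) (htm' k ih.1 ih.2))⟩
  have htm : ∀ k, Measurable (t k) := fun k => htm' k (hgm k).1 (hgm k).2
  have hrm : ∀ k, Measurable (r k) := fun k => h.measurable_received (hp k) (htm k)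
  have htD : ∀ k ω, t k ω ≠ 0 → ω ∈ D k := fun k ω h0 => by
    by_contra hn; exact h0 (indicator_of_notMem hn _)
  have htval : ∀ k, ∀ ω ∈ D k, t k ω = min ((g k).1 ω) ((g k).2 (θ (p k ω) ω)) :=
    fun k ω hω => indicator_of_mem hω _
  have hrval : ∀ k ω, ∀ y ∈ s ω, θ y ω ∈ D k → p k (θ y ω) = -y → r k ω = t k (θ y ω) := by
    intro k ω y hy hyD hyp
    refine h.received_eq hy hyp fun w hw hw0 hwp => hinj k ω w hw y hy (htD k _ hw0) hyD ?_
    rw [hyp, hwp]; simp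
  have htle : ∀ k ω, t k ω ≤ (g k).1 ω := by
    intro k ω
    by_cases hω : ω ∈ D k
    · rw [htval k ω hω]; exact min_le_left _ _
    · rw [ht]; simp [hω]
  have hrle : ∀ k ω, r k ω ≤ (g k).2 ω := by
    intro k ω
    by_cases hex : ∃ y ∈ s ω, θ y ω ∈ D k ∧ p k (θ y ω) = -y
    · obtain ⟨y, hy, hyD, hyp⟩ := hex
      rw [hrval k ω y hy hyD hyp, htval k _ hyD, hyp, h.flow.add_apply, neg_add_cancel,
        h.flow.zero_apply]
      exact min_le_right _ _
    · have : r k ω = 0 := h.received_eq_zero fun w hw hwp => by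
        by_contra h0
        exact hex ⟨w, hw, htD k _ h0, hwp⟩
      rw [this]; exact zero_le
  have hsum1 : ∀ k ω, ∑ j ∈ Finset.range k, t j ω + (g k).1 ω = a ω := by
    intro k ω
    induction k with
    | zero => simp [hg, greedy]
    | succ k ih =>
      rw [Finset.sum_range_succ, g1, add_assoc, add_tsub_cancel_of_le (htle k ω), ih]
  have hsum2 : ∀ k ω, ∑ j ∈ Finset.range k, r j ω + (g k).2 ω = b ω := by
    intro k ω
    induction k with
    | zero => simp [hg, greedy]
    | succ k ih =>
      rw [Finset.sum_range_succ, g2, add_assoc, add_tsub_cancel_of_le (hrle k ω), ih]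
  have hT : ∀ ω, ∑' k, t k ω ≤ a ω := fun ω => by
    rw [ENNReal.tsum_eq_iSup_nat]
    exact iSup_le fun k => (hsum1 k ω) ▸ le_self_add
  have hR : ∀ ω, ∑' k, r k ω ≤ b ω := fun ω => by
    rw [ENNReal.tsum_eq_iSup_nat]
    exact iSup_le fun k => (hsum2 k ω) ▸ le_self_add
  set la : Ω → ℝ≥0∞ := fun ω => a ω - ∑' k, t k ω with hla
  set lb : Ω → ℝ≥0∞ := fun ω => b ω - ∑' k, r k ω with hlb
  have hlam : Measurable la := ha.sub (Measurable.tsum htm)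
  have hlbm : Measurable lb := hb.sub (Measurable.tsum hrm)
  have hla_le : ∀ k ω, la ω ≤ (g k).1 ω := fun k ω => by
    rw [hla]; simp only
    rw [tsub_le_iff_left, ← hsum1 k ω]
    gcongr
    exact ENNReal.sum_le_tsum _
  have hlb_le : ∀ k ω, lb ω ≤ (g k).2 ω := fun k ω => by
    rw [hlb]; simp only
    rw [tsub_le_iff_left, ← hsum2 k ω]
    gcongr
    exact ENNReal.sum_le_tsum _
  -- When the rule matching `y` with `x` is applied, one of the two is exhausted, so unsatisfied
  -- supply and unsatisfied demand never coexist.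
  have hdich : ∀ ω, ∀ y ∈ s ω, ∀ x ∈ s ω, la (θ y ω) = 0 ∨ lb (θ x ω) = 0 := by
    intro ω y hy x hx
    obtain ⟨k, hk, hpk⟩ := hcompl (θ y ω) ((h.mem_shift ω y 0).2 (by simpa using hy)) (x - y)
      ((h.mem_shift ω y _).2 (by simpa using hx))
    have e1 : θ (x - y) (θ y ω) = θ x ω := by rw [h.flow.add_apply]; simp
    have e2 : θ (y - x) (θ x ω) = θ y ω := by rw [h.flow.add_apply]; simp
    have h1 : t k (θ y ω) = min ((g k).1 (θ y ω)) ((g k).2 (θ x ω)) := by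
      rw [htval k _ hk, hpk, e1]
    have h2 : r k (θ x ω) = t k (θ y ω) := by
      rw [hrval k (θ x ω) (y - x) ((h.mem_shift ω x _).2 (by simpa using hy)) (by rwa [e2])
        (by rw [e2, hpk]; abel), e2]
    rcases le_total ((g k).1 (θ y ω)) ((g k).2 (θ x ω)) with hle | hle
    · left
      refine le_antisymm ((hla_le (k+1) _).trans ?_) zero_le
      rw [g1, h1, min_eq_left hle, tsub_self]
    · right
      refine le_antisymm ((hlb_le (k+1) _).trans ?_) zero_le
      rw [g2, h2, h1, min_eq_right hle, tsub_self]
  -- By mass transport the mean unsatisfied supply and demand are equal.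
  set Q := palm P θ χ with hQ
  have hmass : ∫⁻ ω, ∑' k, t k ω ∂Q = ∫⁻ ω, ∑' k, r k ω ∂Q := by
    rw [lintegral_tsum fun k => (htm k).aemeasurable, lintegral_tsum fun k => (hrm k).aemeasurable]
    congr 1; ext k
    exact h.lintegral_received hstat (hp k) (htm k) fun ω h0 => hps k ω (htD k ω h0)
  have hlab : ∫⁻ ω, la ω ∂Q = ∫⁻ ω, lb ω ∂Q := by
    have e1 : ∫⁻ ω, la ω ∂Q + ∫⁻ ω, ∑' k, t k ω ∂Q = ∫⁻ ω, a ω ∂Q := by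
      rw [← lintegral_add_left hlam]
      congr 1; ext ω; exact tsub_add_cancel_of_le (hT ω)
    have e2 : ∫⁻ ω, lb ω ∂Q + ∫⁻ ω, ∑' k, r k ω ∂Q = ∫⁻ ω, b ω ∂Q := by
      rw [← lintegral_add_left hlbm]
      congr 1; ext ω; exact tsub_add_cancel_of_le (hR ω)
    have hfin' : ∫⁻ ω, ∑' k, r k ω ∂Q ≠ ∞ := by
      rw [← hmass]
      exact ne_top_of_le_ne_top hfin (e1 ▸ le_add_self)
    rw [hmass, hab, ← e2] at e1
    exact (ENNReal.add_left_inj hfin').1 e1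
  -- Existence of a point with unsatisfied supply (or demand) is an invariant event, hence trivial.
  -- If both events had probability one they would occur together, against the dichotomy.
  have hθ : Measurable fun q : Ω × Rd d => θ q.2 q.1 :=
    h.flow.measurable_comp measurable_snd measurable_fst
  have hEm : ∀ l : Ω → ℝ≥0∞, Measurable l →
      MeasurableSet {ω | χ ω {y | θ y ω ∈ {ω | l ω ≠ 0}} ≠ 0} := by
    intro l hl
    have hN : MeasurableSet {ω | l ω ≠ 0} := (hl (measurableSet_singleton 0)).compl
    have hmeas : Measurable fun ω => χ ω {y | θ y ω ∈ {ω | l ω ≠ 0}} :=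
      Kernel.measurable_kernel_prodMk_left (κ := χ) (hθ hN)
    exact (hmeas (measurableSet_singleton 0)).compl
  have hE : ∀ l : Ω → ℝ≥0∞, Measurable l →
      P {ω | χ ω {y | θ y ω ∈ {ω | l ω ≠ 0}} ≠ 0} = 0 ∨
      P {ω | χ ω {y | θ y ω ∈ {ω | l ω ≠ 0}} ≠ 0} = 1 := by
    intro l hl
    have hN : MeasurableSet {ω | l ω ≠ 0} := (hl (measurableSet_singleton 0)).compl
    refine herg _ (hEm l hl) fun x => ?_
    ext ω
    have hm : MeasurableSet {y | θ y (θ x ω) ∈ {ω | l ω ≠ 0}} :=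
      (hθ.comp (measurable_prodMk_left (x := θ x ω))) hN
    have : χ (θ x ω) {y | θ y (θ x ω) ∈ {ω | l ω ≠ 0}} = χ ω {y | θ y ω ∈ {ω | l ω ≠ 0}} := by
      rw [h.equi, Measure.map_apply (by fun_prop) hm]
      congr 1; ext y
      simp [h.flow.add_apply]
    show χ (θ x ω) {y | θ y (θ x ω) ∈ {ω | l ω ≠ 0}} ≠ 0 ↔ _
    rw [this]; rfl
  have hzero : ∀ l : Ω → ℝ≥0∞, Measurable l →
      P {ω | χ ω {y | θ y ω ∈ {ω | l ω ≠ 0}} ≠ 0} = 0 → ∫⁻ ω, l ω ∂Q = 0 := by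
    intro l hl h0
    have hae : ∀ᵐ ω ∂P, χ ω {y | θ y ω ∈ {ω | l ω ≠ 0}} = 0 := by
      filter_upwards [measure_eq_zero_iff_ae_notMem.1 h0] with ω hω
      by_contra hne; exact hω hne
    rw [hQ, lintegral_palm h.flow χ hl]
    refine (lintegral_congr_ae (g := fun _ => 0) ?_).trans lintegral_zero
    filter_upwards [hae] with ω hω
    refine (lintegral_congr_ae (g := fun _ => 0) ?_).trans lintegral_zero
    refine ae_restrict_of_ae ?_
    exact (measure_eq_zero_iff_ae_notMem.1 hω).mono fun y hy => not_not.1 hy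
  have hboth : ∫⁻ ω, la ω ∂Q = 0 ∧ ∫⁻ ω, lb ω ∂Q = 0 := by
    rcases hE la hlam with h1 | h1
    · have := hzero la hlam h1
      exact ⟨this, hlab ▸ this⟩
    rcases hE lb hlbm with h2 | h2
    · have := hzero lb hlbm h2
      exact ⟨hlab ▸ this, this⟩
    exfalso
    have i1 : ∀ᵐ ω ∂P, χ ω {y | θ y ω ∈ {ω | la ω ≠ 0}} ≠ 0 :=
      (mem_ae_iff_prob_eq_one (hEm la hlam)).2 h1
    have i2 : ∀ᵐ ω ∂P, χ ω {y | θ y ω ∈ {ω | lb ω ≠ 0}} ≠ 0 :=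
      (mem_ae_iff_prob_eq_one (hEm lb hlbm)).2 h2
    obtain ⟨ω, hω1, hω2⟩ := (i1.and i2).exists
    have key : ∀ l : Ω → ℝ≥0∞, χ ω {y | θ y ω ∈ {ω | l ω ≠ 0}} ≠ 0 →
        ∃ y ∈ s ω, l (θ y ω) ≠ 0 := by
      intro l hl
      by_contra! hcon
      exact hl (h.apply_eq_zero ω fun x hx => by simpa using hcon x hx)
    obtain ⟨y, hy, hy0⟩ := key la hω1
    obtain ⟨x, hx, hx0⟩ := key lb hω2
    rcases hdich ω y hy x hx with h0 | h0
    · exact hy0 h0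
    · exact hx0 h0
  have hnull : Q {ω | ¬ (a ω ≠ ∞ ∧ b ω ≠ ∞ ∧ la ω = 0 ∧ lb ω = 0)} = 0 := by
    have j1 := ae_lt_top ha hfin
    have j2 := ae_lt_top hb (hab ▸ hfin)
    have j3 := (lintegral_eq_zero_iff hlam).1 hboth.1
    have j4 := (lintegral_eq_zero_iff hlbm).1 hboth.2
    have : ∀ᵐ ω ∂Q, a ω ≠ ∞ ∧ b ω ≠ ∞ ∧ la ω = 0 ∧ lb ω = 0 := by
      filter_upwards [j1, j2, j3, j4] with ω k1 k2 k3 k4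
      exact ⟨k1.ne, k2.ne, k3, k4⟩
    exact this
  have hNm : MeasurableSet {ω | ¬ (a ω ≠ ∞ ∧ b ω ≠ ∞ ∧ la ω = 0 ∧ lb ω = 0)} := by
    refine MeasurableSet.compl ?_
    exact (ha (measurableSet_singleton ∞)).compl.inter ((hb (measurableSet_singleton ∞)).compl.inter
      ((hlam (measurableSet_singleton 0)).inter (hlbm (measurableSet_singleton 0))))
  refine ⟨p, t, hp, htm, fun k ω h0 => hps k ω (htD k ω h0),
    fun k ω y hy y' hy' h1 h2 he => hinj k ω y hy y' hy' (htD _ _ h1) (htD _ _ h2) he, ?_⟩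
  filter_upwards [ae_of_palm_null h.flow hstat χ h.equi hNm hnull] with ω hω y hy
  have hy' := not_not.1 (h.ae_of_mem ω hω hy)
  refine ⟨hy'.1, hy'.2.1, le_antisymm (hT _) (tsub_eq_zero_iff_le.1 hy'.2.2.1),
    le_antisymm (hR _) (tsub_eq_zero_iff_le.1 hy'.2.2.2)⟩

end PointField

/-! ### Rank and quantile maps -/

section real
open Filter Topology

/-- The distribution function of a finite diffuse measure is continuous. -/
lemma continuous_real_Iic (ν : Measure ℝ) [IsFiniteMeasure ν] [NullSingletonClass ν] :
    Continuous fun t => ν.real (Iic t) := by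
  have h1 : ∀ t, ν.real (Iic t) = ν.real (Iic 0) + ∫ _ in (0:ℝ)..t, (1:ℝ) ∂ν := by
    intro t
    rw [← intervalIntegral.integral_Iic_sub_Iic (by simp) (by simp)]
    simp
  rw [show (fun t => ν.real (Iic t)) = _ from funext h1]
  exact continuous_const.add (intervalIntegral.continuous_primitive (fun a b => by simp) 0)

lemma tendsto_real_Iic_atTop (ν : Measure ℝ) [IsFiniteMeasure ν] :
    Tendsto (fun t => ν.real (Iic t)) atTop (𝓝 (ν.real univ)) :=
  (ENNReal.tendsto_toReal (measure_ne_top _ _)).comp (tendsto_measure_Iic_atTop ν)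

/-- Probability integral transform: the distribution function of a finite diffuse measure carries it
to Lebesgue measure on an interval of the same length as its mass. -/
lemma map_real_Iic (ν : Measure ℝ) [IsFiniteMeasure ν] [NullSingletonClass ν] :
    ν.map (fun t => ν.real (Iic t)) = volume.restrict (Ico 0 (ν.real univ)) := by
  set G : ℝ → ℝ := fun t => ν.real (Iic t) with hG
  have hGc : Continuous G := continuous_real_Iic ν
  have hGm : Monotone G := fun x y hxy => measureReal_mono (Iic_subset_Iic.2 hxy)
  refine Measure.ext_of_Iic _ _ fun c => ?_
  rw [Measure.map_apply hGc.measurable measurableSet_Iic, Measure.restrict_apply measurableSet_Iic]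
  rcases lt_or_ge c 0 with hc | hc
  · have e1 : G ⁻¹' Iic c = ∅ := by
      ext t; simp only [mem_preimage, mem_Iic, mem_empty_iff_false, iff_false, not_le]
      exact hc.trans_le measureReal_nonneg
    have e2 : Iic c ∩ Ico 0 (ν.real univ) = ∅ := by
      ext t; simp only [mem_inter_iff, mem_Iic, mem_Ico, mem_empty_iff_false, iff_false]
      intro h; linarith [h.1, h.2.1]
    rw [e1, e2]; simp
  rcases lt_or_ge c (ν.real univ) with hcM | hcM
  · have e2 : Iic c ∩ Ico 0 (ν.real univ) = Icc 0 c := by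
      ext t; simp only [mem_inter_iff, mem_Iic, mem_Ico, mem_Icc]
      constructor
      · intro h; exact ⟨h.2.1, h.1⟩
      · intro h; exact ⟨h.2, h.1, h.2.trans_lt hcM⟩
    rw [e2, Real.volume_Icc, sub_zero]
    have hbdd : ∃ B, c < G B :=
      ((tendsto_real_Iic_atTop ν).eventually (lt_mem_nhds hcM)).exists
    obtain ⟨B, hB⟩ := hbdd
    rcases (G ⁻¹' Iic c).eq_empty_or_nonempty with hemp | hne
    · have hc0 : c ≤ 0 := by
        have ht : Tendsto G atBot (𝓝 0) := by
          have h0 := tendsto_measure_iInter_atBot (μ := ν) (s := fun t : ℝ => Iic t)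
            (fun t => measurableSet_Iic.nullMeasurableSet)
            (fun _ _ h => Iic_subset_Iic.2 h) ⟨0, measure_ne_top _ _⟩
          rw [iInter_Iic_eq_empty_iff.2 (by simp [not_bddBelow_univ]), measure_empty] at h0
          exact (ENNReal.tendsto_toReal zero_ne_top).comp h0
        refine le_of_tendsto' ht.neg (b := -c) (fun t => ?_) |> fun h => by simpa using h
        have : t ∉ G ⁻¹' Iic c := by rw [hemp]; simp
        simp only [mem_preimage, mem_Iic, not_le] at this
        linarith
      rw [hemp, measure_empty, ENNReal.ofReal_of_nonpos hc0]
    · have hbd : BddAbove (G ⁻¹' Iic c) := ⟨B, fun t ht => by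
        by_contra hlt
        exact absurd (hB.trans_le (hGm (not_le.1 hlt).le)) (not_lt.2 ht)⟩
      have hcl : IsClosed (G ⁻¹' Iic c) := isClosed_Iic.preimage hGc
      set t1 := sSup (G ⁻¹' Iic c)
      have ht1 : t1 ∈ G ⁻¹' Iic c := hcl.csSup_mem hne hbd
      have e3 : G ⁻¹' Iic c = Iic t1 := by
        ext t; exact ⟨fun h => le_csSup hbd h, fun h => (hGm h).trans ht1⟩
      have e4 : G t1 = c := by
        refine le_antisymm ht1 ?_
        have : Tendsto G (𝓝[>] t1) (𝓝 (G t1)) := hGc.continuousAt.mono_left nhdsWithin_le_nhds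
        refine ge_of_tendsto this ?_
        filter_upwards [self_mem_nhdsWithin] with t ht
        have : t ∉ G ⁻¹' Iic c := by rw [e3]; exact not_le.2 (mem_Ioi.1 ht)
        exact (not_le.1 this).le
      rw [e3, ← e4, hG]; simp
  · have e1 : G ⁻¹' Iic c = univ := by
      ext t; simp only [mem_preimage, mem_Iic, mem_univ, iff_true]
      exact (measureReal_mono (subset_univ _)).trans hcM
    have e2 : Iic c ∩ Ico 0 (ν.real univ) = Ico 0 (ν.real univ) :=
      inter_eq_right.2 fun t ht => (ht.2.le).trans hcM
    rw [e1, e2]; simp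

/-- On a standard Borel space, ordered through its embedding into `ℝ`, the rank of a point carries a
finite diffuse measure to Lebesgue measure on an interval. -/
lemma map_rank {Y : Type*} [MeasurableSpace Y] [StandardBorelSpace Y] (μ : Measure Y)
    [IsFiniteMeasure μ] (hμ : ∀ y, μ {y} = 0) :
    μ.map (fun w => μ.real {w' | embeddingReal Y w' ≤ embeddingReal Y w}) =
      volume.restrict (Ico 0 (μ.real univ)) := by
  have hφ := measurableEmbedding_embeddingReal Y
  set ν := μ.map (embeddingReal Y) with hν
  have : IsFiniteMeasure ν := inferInstance
  have hna : NullSingletonClass ν := ⟨fun t => by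
    rw [hν, Measure.map_apply hφ.measurable (measurableSet_singleton t)]
    have hs : (embeddingReal Y ⁻¹' {t}).Subsingleton := fun a ha b hb =>
      hφ.injective (ha.trans hb.symm)
    rcases hs.eq_empty_or_singleton with h | ⟨y, h⟩
    · rw [h]; simp
    · rw [h]; exact hμ y⟩
  have h := map_real_Iic ν
  have e : ∀ t, ν.real (Iic t) = μ.real {w' | embeddingReal Y w' ≤ t} := fun t => by
    rw [hν, map_measureReal_apply hφ.measurable measurableSet_Iic]; rfl
  have e' : ν.real univ = μ.real univ := by
    rw [hν, map_measureReal_apply hφ.measurable MeasurableSet.univ]; rfl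
  rw [e', hν, Measure.map_map (continuous_real_Iic ν).measurable hφ.measurable] at h
  rw [← h]
  congr 1; ext w
  exact (e _).symm

/-- Every finite measure of a kernel is, jointly measurably in the parameter, the image of Lebesgue
measure on an interval. No diffuseness is required. -/
lemma exists_quantile {Y : Type*} [MeasurableSpace Y] [StandardBorelSpace Y] [Inhabited Y]
    (κ : Kernel Ω Y) :
    ∃ f : Ω → ℝ → Y, Measurable (Function.uncurry f) ∧ ∀ ω, κ ω univ ≠ ∞ →
      (volume.restrict (Ico 0 (κ ω univ).toReal)).map (f ω) = κ ω := by
  classical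
  have hm := κ.measurable_coe MeasurableSet.univ
  set Z : Set Ω := {ω | κ ω univ = 0 ∨ κ ω univ = ∞} with hZ
  have hZm : MeasurableSet Z :=
    (hm (measurableSet_singleton 0)).union (hm (measurableSet_singleton ∞))
  -- `N` is `κ` normalised to a Markov kernel, with a Dirac mass where this is impossible.
  let N : Kernel Ω Y := ⟨fun ω => if ω ∈ Z then Measure.dirac default else (κ ω univ)⁻¹ • κ ω, by
    refine Measure.measurable_of_measurable_coe _ fun A hA => ?_
    have : (fun ω => (if ω ∈ Z then Measure.dirac (default : Y) else (κ ω univ)⁻¹ • κ ω) A) =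
        fun ω => if ω ∈ Z then Measure.dirac (default : Y) A else (κ ω univ)⁻¹ * κ ω A := by
      ext ω; split_ifs <;> simp
    rw [this]
    exact Measurable.ite hZm measurable_const (hm.inv.mul (κ.measurable_coe hA))⟩
  have hN : ∀ ω, N ω = if ω ∈ Z then Measure.dirac default else (κ ω univ)⁻¹ • κ ω := fun ω => rfl
  have hNM : IsMarkovKernel N := ⟨fun ω => ⟨by
    rw [hN]; split_ifs with h
    · simp
    · simp only [hZ, mem_ofPred_eq, not_or] at h
      simp [ENNReal.inv_mul_cancel h.1 h.2]⟩⟩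
  obtain ⟨f, hf, hfN⟩ := N.exists_measurable_map_eq_unitInterval
  refine ⟨fun ω v => f ω (projIcc 0 1 zero_le_one (v / (κ ω univ).toReal)), ?_, fun ω hω => ?_⟩
  · have : Measurable fun q : Ω × ℝ => (q.1, projIcc (0:ℝ) 1 zero_le_one (q.2 / (κ q.1 univ).toReal)) :=
      measurable_fst.prodMk (continuous_projIcc.measurable.comp
        (measurable_snd.div (hm.comp measurable_fst).ennreal_toReal))
    exact hf.comp this
  · have hfω : Measurable (f ω) := hf.comp measurable_prodMk_left
    by_cases h0 : κ ω univ = 0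
    · rw [Measure.measure_univ_eq_zero.1 h0]; simp
    have hωZ : ω ∉ Z := fun h => h.elim h0 hω
    set m := (κ ω univ).toReal with hmdef
    have hmpos : 0 < m := ENNReal.toReal_pos h0 hω
    have hpm : Measurable fun v : ℝ => projIcc (0:ℝ) 1 zero_le_one (v / m) :=
      continuous_projIcc.measurable.comp (measurable_id.div_const m)
    have hscale : (volume.restrict (Ico 0 m)).map (fun v => projIcc (0:ℝ) 1 zero_le_one (v / m)) =
        κ ω univ • (volume : Measure unitInterval) := by
      ext A hA
      rw [Measure.map_apply hpm hA, Measure.restrict_apply (hpm hA), Measure.smul_apply,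
        smul_eq_mul]
      have hvol : volume A = volume (((↑) : unitInterval → ℝ) '' A) := by
        rw [Measure.Subtype.volume_def, comap_subtype_coe_apply measurableSet_Icc]
      rw [hvol]
      have e1 : κ ω univ * volume (((↑) : unitInterval → ℝ) '' A) =
          volume ((fun v => v / m) ⁻¹' (((↑) : unitInterval → ℝ) '' A)) := by
        have := Real.volume_preimage_mul_right (a := m⁻¹) (by positivity) (((↑) : unitInterval → ℝ) '' A)
        simp only [div_eq_mul_inv]
        rw [this, inv_inv, abs_of_pos hmpos, hmdef, ENNReal.ofReal_toReal hω]
      rw [e1]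
      refine measure_congr ?_
      have hne : ∀ᵐ v : ℝ, v ≠ m := by simp [ae_iff]
      filter_upwards [hne] with v hv
      refine propext ?_
      show (projIcc (0:ℝ) 1 zero_le_one (v / m) ∈ A ∧ v ∈ Ico 0 m) ↔
        v / m ∈ ((↑) : unitInterval → ℝ) '' A
      constructor
      · rintro ⟨h1, h2⟩
        have h3 : v / m ∈ Icc (0:ℝ) 1 :=
          ⟨div_nonneg h2.1 hmpos.le, (div_le_one hmpos).2 h2.2.le⟩
        rw [projIcc_of_mem _ h3] at h1
        exact ⟨_, h1, rfl⟩
      · rintro ⟨⟨u, hu⟩, hA', rfl : u = v / m⟩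
        refine ⟨by rwa [projIcc_of_mem _ hu], ?_, ?_⟩
        · have := hu.1; rw [le_div_iff₀ hmpos] at this; linarith
        · have := (div_le_one hmpos).1 hu.2
          exact lt_of_le_of_ne this hv
    have hcomp := congrArg (Measure.map (f ω)) hscale
    rw [Measure.map_map hfω hpm,
      Measure.map_smul, hfN, hN, if_neg hωZ, smul_smul, ENNReal.mul_inv_cancel h0 hω, one_smul]
      at hcomp
    exact hcomp

end real

/-! ### Slots and gluing -/

section slots

/-- The left end of the `k`-th of the consecutive intervals, starting at `0`, with lengths `T j`.
It is meaningful when all `T j` are finite. -/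
def psum (T : ℕ → ℝ≥0∞) (k : ℕ) : ℝ := ∑ j ∈ Finset.range k, (T j).toReal

lemma psum_succ (T : ℕ → ℝ≥0∞) (k : ℕ) : psum T (k + 1) = psum T k + (T k).toReal :=
  Finset.sum_range_succ _ _

lemma psum_mono (T : ℕ → ℝ≥0∞) : Monotone (psum T) :=
  monotone_nat_of_le_succ fun k => by rw [psum_succ]; linarith [(T k).toReal_nonneg]

lemma exists_slot (T : ℕ → ℝ≥0∞) (u : ℝ) :
    ∃ k, u < psum T (k + 1) ∨ ∀ j, ¬ u < psum T (j + 1) := by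
  by_cases h : ∃ k, u < psum T (k + 1)
  · exact ⟨h.choose, Or.inl h.choose_spec⟩
  · exact ⟨0, Or.inr fun j hj => h ⟨j, hj⟩⟩

open Classical in
/-- The index of the interval `[psum T k, psum T (k + 1))` that contains `u`; it is `0` when `u`
lies beyond all of them. -/
def slot (T : ℕ → ℝ≥0∞) (u : ℝ) : ℕ := Nat.find (exists_slot T u)

lemma slot_eq {T : ℕ → ℝ≥0∞} {u : ℝ} {k : ℕ} (hu : u ∈ Ico (psum T k) (psum T (k + 1))) :
    slot T u = k := by
  classical
  refine (Nat.find_eq_iff _).2 ⟨Or.inl hu.2, fun n hn hc => ?_⟩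
  rcases hc with hc | hc
  · exact absurd (hc.trans_le (psum_mono T (Nat.succ_le_of_lt hn))) (not_lt.2 hu.1)
  · exact hc k hu.2

lemma measurable_psum {X : Type*} [MeasurableSpace X] {T : ℕ → X → ℝ≥0∞}
    (hT : ∀ k, Measurable (T k)) (k : ℕ) : Measurable fun x => psum (fun j => T j x) k :=
  Finset.measurable_fun_sum _ fun j _ => (hT j).ennreal_toReal

/-- Selecting the function `F k` by the slot of `u` preserves measurability. -/
lemma measurable_slot {X Y : Type*} [MeasurableSpace X] [MeasurableSpace Y] {T : ℕ → X → ℝ≥0∞}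
    (hT : ∀ k, Measurable (T k)) {u : X → ℝ} (hu : Measurable u) {F : ℕ → X → Y}
    (hF : ∀ k, Measurable (F k)) :
    Measurable fun x => F (slot (fun j => T j x) (u x)) x := by
  classical
  refine Measurable.find (p := fun k x => u x < psum (fun j => T j x) (k + 1) ∨
    ∀ j, ¬ u x < psum (fun j => T j x) (j + 1)) hF (fun k => ?_) _
  have h1 : ∀ k, MeasurableSet {x | u x < psum (fun j => T j x) (k + 1)} := fun k =>
    measurableSet_lt hu (measurable_psum hT _)
  refine (h1 k).union ?_
  have : {x | ∀ j, ¬ u x < psum (fun j => T j x) (j + 1)} =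
      ⋂ j, {x | u x < psum (fun j => T j x) (j + 1)}ᶜ := by ext x; simp
  show MeasurableSet {x | ∀ j, ¬ u x < psum (fun j => T j x) (j + 1)}
  rw [this]
  exact MeasurableSet.iInter fun j => (h1 j).compl

lemma volume_Ico_split {T : ℕ → ℝ≥0∞} (hT : ∑' k, T k ≠ ∞) {B : Set ℝ} (hB : MeasurableSet B) :
    volume (Ico 0 (∑' k, T k).toReal ∩ B) =
      ∑' k, volume (Ico (psum T k) (psum T (k + 1)) ∩ B) := by
  have hTk : ∀ k, T k ≠ ∞ := ENNReal.ne_top_of_tsum_ne_top hT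
  have hlim : Filter.Tendsto (psum T) Filter.atTop (nhds (∑' k, T k).toReal) := by
    rw [ENNReal.tsum_toReal_eq hTk]
    exact (ENNReal.summable_toReal hT).hasSum.tendsto_sum_nat
  have hle : ∀ k, psum T k ≤ (∑' k, T k).toReal := (psum_mono T).ge_of_tendsto hlim
  have h0 : ∀ k, 0 ≤ psum T k := fun k => Finset.sum_nonneg fun j _ => ENNReal.toReal_nonneg
  have hU : Ico 0 (∑' k, T k).toReal = ⋃ k, Ico (psum T k) (psum T (k + 1)) := by
    classical
    ext u
    simp only [mem_iUnion]
    constructor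
    · intro hu
      have hex : ∃ k, u < psum T k := (hlim.eventually (lt_mem_nhds hu.2)).exists
      have hne : Nat.find hex ≠ 0 := fun h => by
        have := Nat.find_spec hex
        rw [h] at this
        simp only [psum, Finset.range_zero, Finset.sum_empty] at this
        exact absurd this (not_lt.2 hu.1)
      obtain ⟨k, hk⟩ := Nat.exists_eq_succ_of_ne_zero hne
      refine ⟨k, not_lt.1 (Nat.find_min hex (m := k) (by omega)), ?_⟩
      have := Nat.find_spec hex
      rwa [hk] at this
    · rintro ⟨k, hk⟩
      exact ⟨(h0 k).trans hk.1, hk.2.trans_le (hle _)⟩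
  rw [hU, iUnion_inter, measure_iUnion]
  · intro i j hij
    exact ((psum_mono T).pairwise_disjoint_on_Ico_succ hij).mono inter_subset_left inter_subset_left
  · exact fun k => measurableSet_Ico.inter hB

end slots

section balance
variable {X : Type*} [MeasurableSpace X]

/-- Deterministic gluing. The space is partitioned into cells `V y`, `y ∈ s`. The function `U`
parametrises the `ξ`-mass of the cell of `y` by an interval which is cut into slots of lengths
`T k y`, while `f x` parametrises the `η`-mass of the cell of `x` from an interval cut into slots of
lengths `R k x`. If for every `k` the `k`-th slot of `y` is translated onto the `k`-th slot of
`tgt k y`, and all non-empty slots are matched bijectively in this way, then the resulting map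
pushes `ξ` forward to `η`. -/
lemma balance_of_slots {ξ η : Measure X} {s : Set X} (hs : s.Countable) {V : X → Set X}
    (hV : ∀ y, MeasurableSet (V y)) (hdisj : Pairwise fun x y => Disjoint (V x) (V y))
    (hcov : ∀ z, ∃ y ∈ s, z ∈ V y)
    {U : X → ℝ} {T R : ℕ → X → ℝ≥0∞} {tgt : ℕ → X → X} {f : X → ℝ → X}
    (hf : ∀ x, Measurable (f x))
    (htgt : ∀ k, ∀ y ∈ s, T k y ≠ 0 → tgt k y ∈ s)
    (hinj : ∀ k, ∀ y ∈ s, ∀ y' ∈ s, T k y ≠ 0 → T k y' ≠ 0 → tgt k y = tgt k y' → y = y')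
    (hR : ∀ k, ∀ y ∈ s, T k y ≠ 0 → R k (tgt k y) = T k y)
    (hR0 : ∀ k, ∀ x ∈ s, R k x ≠ 0 → ∃ y ∈ s, T k y ≠ 0 ∧ tgt k y = x)
    (hTfin : ∀ y ∈ s, ∑' k, T k y ≠ ∞) (hRfin : ∀ x ∈ s, ∑' k, R k x ≠ ∞)
    (hξ : ∀ y ∈ s, ∀ B : Set ℝ, MeasurableSet B →
      ξ (V y ∩ U ⁻¹' B) = volume (Ico 0 (∑' k, T k y).toReal ∩ B))
    (hη : ∀ x ∈ s, ∀ C : Set X, MeasurableSet C →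
      volume (Ico 0 (∑' k, R k x).toReal ∩ f x ⁻¹' C) = η (V x ∩ C))
    {τ : X → X} (hτm : Measurable τ)
    (hτ : ∀ y ∈ s, ∀ z ∈ V y, τ z =
      f (tgt (slot (fun j => T j y) (U z)) y) (U z - psum (fun j => T j y)
        (slot (fun j => T j y) (U z)) + psum (fun j => R j
          (tgt (slot (fun j => T j y) (U z)) y)) (slot (fun j => T j y) (U z))))
    {C : Set X} (hC : MeasurableSet C) : ξ (τ ⁻¹' C) = η C := by
  classical
  have := hs.to_subtype
  -- Both measures are split along cells and slots; the contribution of the `k`-th slot of `x` to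
  -- `η C` is `g k x`, and that of the `k`-th slot of `y` to the `ξ`-mass of the preimage of `C` is
  -- `g k (tgt k y)`.
  have hdec : ∀ (μ : Measure X) (A : Set X), MeasurableSet A → μ A = ∑' y : s, μ (V y ∩ A) := by
    intro μ A hA
    rw [← measure_iUnion]
    · congr 1; ext z
      simp only [mem_iUnion, mem_inter_iff]
      constructor
      · intro hz
        obtain ⟨y, hy, hzy⟩ := hcov z
        exact ⟨⟨y, hy⟩, hzy, hz⟩
      · rintro ⟨_, _, hz⟩; exact hz
    · intro x y hxy
      exact (hdisj (fun h => hxy (Subtype.ext h))).mono inter_subset_left inter_subset_left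
    · exact fun y => (hV y).inter hA
  set g : ℕ → X → ℝ≥0∞ := fun k x =>
    volume (Ico (psum (fun j => R j x) k) (psum (fun j => R j x) (k + 1)) ∩ f x ⁻¹' C) with hg
  have hg0 : ∀ k x, R k x = 0 → g k x = 0 := by
    intro k x h0
    simp [hg, psum_succ, h0]
  have hleft : ∀ y : s, ξ (V y ∩ τ ⁻¹' C) = ∑' k, if T k y ≠ 0 then g k (tgt k y) else 0 := by
    rintro ⟨y, hy⟩
    set Ty : ℕ → ℝ≥0∞ := fun j => T j y with hTy
    set Φ : ℕ → ℝ → X := fun k u => f (tgt k y) (u - psum Ty k + psum (fun j => R j (tgt k y)) k)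
      with hΦ
    have hΦm : ∀ k, Measurable (Φ k) := fun k => (hf _).comp (by fun_prop)
    have hBm : Measurable fun u => Φ (slot Ty u) u :=
      measurable_slot (T := fun j _ => Ty j) (fun k => measurable_const) measurable_id hΦm
    have e1 : V y ∩ τ ⁻¹' C = V y ∩ U ⁻¹' ((fun u => Φ (slot Ty u) u) ⁻¹' C) := by
      ext z
      refine and_congr_right fun hz => ?_
      show τ z ∈ C ↔ Φ (slot Ty (U z)) (U z) ∈ C
      rw [hτ y hy z hz]
    show ξ (V y ∩ τ ⁻¹' C) = _
    rw [e1, hξ y hy _ (hBm hC), volume_Ico_split (hTfin y hy) (hBm hC)]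
    congr 1; ext k
    by_cases h0 : T k y = 0
    · simp [psum_succ, h0, hTy]
    have hTk : T k y ≠ ∞ := ENNReal.ne_top_of_tsum_ne_top (hTfin y hy) k
    rw [if_pos h0, hg]
    simp only
    rw [psum_succ, psum_succ, hR k y hy h0]
    have e2 : Ico (psum Ty k) (psum Ty k + (Ty k).toReal) ∩ (fun u => Φ (slot Ty u) u) ⁻¹' C =
        (fun u => u + (psum (fun j => R j (tgt k y)) k - psum Ty k)) ⁻¹'
          (Ico (psum (fun j => R j (tgt k y)) k)
            (psum (fun j => R j (tgt k y)) k + (T k y).toReal) ∩ f (tgt k y) ⁻¹' C) := by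
      ext u
      simp only [mem_inter_iff, mem_preimage, mem_Ico]
      have hu1 : (psum Ty k ≤ u ∧ u < psum Ty k + (Ty k).toReal) ↔
        (psum (fun j => R j (tgt k y)) k ≤ u + (psum (fun j => R j (tgt k y)) k - psum Ty k) ∧
          u + (psum (fun j => R j (tgt k y)) k - psum Ty k) <
            psum (fun j => R j (tgt k y)) k + (T k y).toReal) := by
        simp only [hTy]
        constructor <;> rintro ⟨h1, h2⟩ <;> constructor <;> linarith
      rw [← hu1]
      refine and_congr_right fun hu => ?_
      rw [slot_eq (T := Ty) (k := k) (by rw [psum_succ]; exact hu), hΦ]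
      simp only
      rw [show u - psum Ty k + psum (fun j => R j (tgt k y)) k =
        u + (psum (fun j => R j (tgt k y)) k - psum Ty k) by ring]
    rw [e2, measure_preimage_add_right]
  have hright : ∀ x : s, η (V x ∩ C) = ∑' k, g k x := by
    rintro ⟨x, hx⟩
    rw [← hη x hx C hC, volume_Ico_split (hRfin x hx) (hf x hC)]
  rw [hdec ξ _ (hτm hC), hdec η C hC]
  simp_rw [hleft, hright]
  rw [ENNReal.tsum_comm, ENNReal.tsum_comm (f := fun (x : s) k => g k x)]
  congr 1; ext k
  have e3 : ∀ y : s, (if T k y ≠ 0 then g k (tgt k y) else 0) =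
      ∑' x : s, if T k y ≠ 0 ∧ tgt k y = x then g k x else 0 := by
    intro y
    by_cases h0 : T k y = 0
    · simp [h0]
    · rw [if_pos h0, tsum_eq_single ⟨tgt k y, htgt k y y.2 h0⟩]
      · simp [h0]
      · intro x hx
        rw [if_neg]
        rintro ⟨_, he⟩
        exact hx (Subtype.ext he.symm)
  simp_rw [e3]
  rw [ENNReal.tsum_comm]
  congr 1; ext x
  by_cases h0 : R k x = 0
  · simp [hg0 k x h0]
  · obtain ⟨y, hy, hyT, hyx⟩ := hR0 k x x.2 h0
    rw [tsum_eq_single ⟨y, hy⟩]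
    · simp [hyT, hyx]
    · intro y' hne
      rw [if_neg]
      rintro ⟨h1, h2⟩
      exact hne (Subtype.ext (hinj k y' y'.2 y hy h1 hyT (h2.trans hyx.symm)))

end balance

/-! ### The displacement for a nowhere vanishing point process -/

namespace PointField
variable {d : ℕ} {θ : Rd d → Ω → Ω} {χ : Kernel Ω (Rd d)} {s : Ω → Set (Rd d)}

/-- The pairs `(ω, z)` such that the location `z` selects the origin, where `z` selects the point
`z + π (θ z ω)`. For a selection `π` of points of the process, the cells of the points partition
the space. -/
def cell (θ : Rd d → Ω → Ω) (π : Ω → Rd d) : Set (Ω × Rd d) := {q | q.2 + π (θ q.2 q.1) = 0}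

lemma measurableSet_cell (h : PointField θ χ s) {π : Ω → Rd d} (hπ : Measurable π) :
    MeasurableSet (cell θ π) :=
  measurableSet_eq_fun
    (measurable_snd.add (hπ.comp (h.flow.measurable_comp measurable_snd measurable_fst)))
    measurable_const

lemma mem_cell_shift (h : PointField θ χ s) (π : Ω → Rd d) (ω : Ω) (y z : Rd d) :
    (θ y ω, z - y) ∈ cell θ π ↔ z + π (θ z ω) = y := by
  show z - y + π (θ (z - y) (θ y ω)) = 0 ↔ _
  rw [h.flow.add_apply, sub_add_cancel, sub_add_eq_add_sub, sub_eq_zero]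

/-- Seen from a typical point of the process, the mean `ν`-mass of its cell is the intensity
of `ν`. -/
lemma lintegral_cell (h : PointField θ χ s) {P : Measure Ω} [IsProbabilityMeasure P]
    (hstat : IsStationary P θ) {π : Ω → Rd d} (hπ : Measurable π) (hπs : ∀ ω, π ω ∈ s ω)
    (ν : Kernel Ω (Rd d)) [IsSFiniteKernel ν] (hν : Equivariant θ ν) :
    ∫⁻ ω, ν ω {w | (ω, w) ∈ cell θ π} ∂palm P θ χ = ∫⁻ ω, ν ω (unitCube d) ∂P := by
  have := h.sfin
  have hW := h.measurableSet_cell hπ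
  have key := palm_exchange (P := P) h.flow hstat χ ν h.equi hν
    (F := (cell θ π).indicator 1) (measurable_one.indicator hW)
  rw [← palm_univ h.flow ν]
  calc ∫⁻ ω, ν ω {w | (ω, w) ∈ cell θ π} ∂palm P θ χ
      = ∫⁻ ω, ∫⁻ w, (cell θ π).indicator 1 (ω, w) ∂ν ω ∂palm P θ χ := by
        congr 1; ext ω
        have hm : MeasurableSet {w | (ω, w) ∈ cell θ π} := measurable_prodMk_left hW
        rw [← lintegral_indicator_one hm]
        rfl
    _ = ∫⁻ ω, 1 ∂palm P θ ν := by
        rw [key]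
        congr 1; ext ω
        have : ∀ w, (θ w ω, -w) ∈ cell θ π ↔ w = π ω := fun w => by
          rw [← zero_sub w, h.mem_cell_shift, zero_add, h.flow.zero_apply, eq_comm]
        rw [h.lintegral_eq, tsum_eq_single ⟨π ω, hπs ω⟩]
        · rw [indicator_of_mem ((this _).2 rfl)]; rfl
        · rintro ⟨w, hw⟩ hne
          exact indicator_of_notMem (fun hm => hne (Subtype.ext ((this w).1 hm))) _
    _ = palm P θ ν univ := by simp

/-- An equivariant balancing map, given by its displacement `D` of the origin, in the presence of a
nowhere vanishing simple point process and without exceptional sets. -/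
theorem exists_displacement (h : PointField θ χ s) {P : Measure Ω} [IsProbabilityMeasure P]
    (hstat : IsStationary P θ) (herg : IsErgodicFlow P θ) (ξ η : Kernel Ω (Rd d))
    [IsSFiniteKernel ξ] [IsSFiniteKernel η] (hξ : Equivariant θ ξ) (hη : Equivariant θ η)
    (hdiff : ∀ ω x, ξ ω {x} = 0)
    (hmass : ∫⁻ ω, ξ ω (unitCube d) ∂P = ∫⁻ ω, η ω (unitCube d) ∂P)
    (hfin : ∫⁻ ω, ξ ω (unitCube d) ∂P ≠ ∞) :
    ∃ D : Ω → Rd d, Measurable D ∧ ∀ᵐ ω ∂P, ∀ C : Set (Rd d), MeasurableSet C →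
      ξ ω {z | z + D (θ z ω) ∈ C} = η ω C := by
  have := h.sfin
  obtain ⟨π, hπ, hπs⟩ := h.exists_root
  set W := cell θ π with hW
  have hWm : MeasurableSet W := h.measurableSet_cell hπ
  have hWω : ∀ ω, MeasurableSet {w | (ω, w) ∈ W} := fun ω => measurable_prodMk_left hWm
  set a : Ω → ℝ≥0∞ := fun ω => ξ ω {w | (ω, w) ∈ W} with ha
  set b : Ω → ℝ≥0∞ := fun ω => η ω {w | (ω, w) ∈ W} with hb
  have ham : Measurable a := Kernel.measurable_kernel_prodMk_left (κ := ξ) hWm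
  have hbm : Measurable b := Kernel.measurable_kernel_prodMk_left (κ := η) hWm
  have hia : ∫⁻ ω, a ω ∂palm P θ χ = ∫⁻ ω, ξ ω (unitCube d) ∂P :=
    h.lintegral_cell hstat hπ hπs ξ hξ
  have hib : ∫⁻ ω, b ω ∂palm P θ χ = ∫⁻ ω, η ω (unitCube d) ∂P :=
    h.lintegral_cell hstat hπ hπs η hη
  obtain ⟨p, t, hp, ht, hps, hinj, hae⟩ := h.exists_transport hstat herg ham hbm
    (by rw [hia, hib, hmass]) (by rwa [hia])
  set r : ℕ → Ω → ℝ≥0∞ := fun k => received θ χ (p k) (t k) with hr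
  have hrm : ∀ k, Measurable (r k) := fun k => h.measurable_received (hp k) (ht k)
  -- `ηV` is the restriction of `η` to the cell of a point at the origin, and `f` parametrises it
  -- by an interval of length `b ω`.
  let ηV : Kernel Ω (Rd d) := ⟨fun ω => (η ω).restrict {w | (ω, w) ∈ W}, by
    refine Measure.measurable_of_measurable_coe _ fun A hA => ?_
    have e : (fun ω => (η ω).restrict {w | (ω, w) ∈ W} A) =
        fun ω => η ω {w | (ω, w) ∈ Prod.snd ⁻¹' A ∩ W} := by
      ext ω; rw [Measure.restrict_apply hA]; rfl
    rw [e]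
    exact Kernel.measurable_kernel_prodMk_left (κ := η) ((measurable_snd hA).inter hWm)⟩
  have hηV : ∀ ω, ηV ω = (η ω).restrict {w | (ω, w) ∈ W} := fun ω => rfl
  have hηVu : ∀ ω, ηV ω univ = b ω := fun ω => by rw [hηV, Measure.restrict_apply_univ]
  obtain ⟨f, hf, hfV⟩ := exists_quantile ηV
  -- `U0 (ω, z)` is the rank of `z` within the cell of the origin with respect to `ξ`.
  set φ := embeddingReal (Rd d) with hφ
  have hφm : Measurable φ := measurable_embeddingReal _
  set U0 : Ω × Rd d → ℝ := fun q => (ξ q.1 {w | (q.1, w) ∈ W ∧ φ w ≤ φ q.2}).toReal with hU0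
  have hU0m : Measurable U0 := by
    refine Measurable.ennreal_toReal ?_
    have hset : MeasurableSet {r : (Ω × Rd d) × Rd d | (r.1.1, r.2) ∈ W ∧ φ r.2 ≤ φ r.1.2} :=
      MeasurableSet.inter
        ((by fun_prop : Measurable fun r : (Ω × Rd d) × Rd d => (r.1.1, r.2)) hWm)
        (measurableSet_le (hφm.comp measurable_snd)
          (hφm.comp (measurable_snd.comp measurable_fst)))
    exact Kernel.measurable_kernel_prodMk_left (κ := ξ.comap Prod.fst measurable_fst) hset
  have hrank : ∀ ω, a ω ≠ ∞ → ∀ B : Set ℝ, MeasurableSet B →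
      ξ ω {w | (ω, w) ∈ W ∧ U0 (ω, w) ∈ B} = volume (Ico 0 (a ω).toReal ∩ B) := by
    intro ω hω B hB
    set μ := (ξ ω).restrict {w | (ω, w) ∈ W} with hμ
    have hμu : μ univ = a ω := Measure.restrict_apply_univ _
    have : IsFiniteMeasure μ := ⟨by rw [hμu]; exact hω.lt_top⟩
    have h1 := map_rank μ fun y => Measure.restrict_le_self.absolutelyContinuous (hdiff ω y)
    have e : (fun w => μ.real {w' | embeddingReal (Rd d) w' ≤ embeddingReal (Rd d) w}) =
        fun w => U0 (ω, w) := by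
      ext w
      have hm : MeasurableSet {w' | embeddingReal (Rd d) w' ≤ embeddingReal (Rd d) w} :=
        hφm measurableSet_Iic
      rw [Measure.real, hμ, Measure.restrict_apply hm, hU0]
      congr 2
      ext w'; exact and_comm
    have hUm : Measurable fun w => U0 (ω, w) := hU0m.comp measurable_prodMk_left
    rw [e] at h1
    have h2 := DFunLike.congr_fun h1 B
    rw [Measure.map_apply hUm hB, Measure.restrict_apply hB, hμ,
      Measure.restrict_apply (hUm hB), ← hμ, Measure.real, hμu] at h2
    rw [inter_comm, ← h2]
    congr 1; ext w; exact and_comm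
  -- The origin lies in the cell of `π ω` and has rank `u ω` there. `ω1` is the configuration seen
  -- from `π ω`, and `ω2 k` the one seen from the partner of `π ω` under the `k`-th rule. If `u ω`
  -- falls into the `k`-th supply slot of `π ω`, it is translated to the `k`-th demand slot of
  -- the partner and mapped by `f` into the cell of the partner.
  set ω1 : Ω → Ω := fun ω => θ (π ω) ω with hω1
  have hω1m : Measurable ω1 := h.flow.measurable_comp hπ measurable_id
  set u : Ω → ℝ := fun ω => U0 (ω1 ω, - π ω) with hu
  have hum : Measurable u := hU0m.comp (hω1m.prodMk hπ.neg)
  set ω2 : ℕ → Ω → Ω := fun k ω => θ (p k (ω1 ω)) (ω1 ω) with hω2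
  have hω2m : ∀ k, Measurable (ω2 k) := fun k =>
    h.flow.measurable_comp ((hp k).comp hω1m) hω1m
  set F : ℕ → Ω → Rd d := fun k ω => π ω + p k (ω1 ω) +
    f (ω2 k ω) (u ω - psum (fun j => t j (ω1 ω)) k + psum (fun j => r j (ω2 k ω)) k) with hF
  have hFm : ∀ k, Measurable (F k) := by
    intro k
    refine (hπ.add ((hp k).comp hω1m)).add (hf.comp ((hω2m k).prodMk ?_))
    exact (hum.sub (measurable_psum (fun j => (ht j).comp hω1m) k)).add
      (measurable_psum (fun j => (hrm j).comp (hω2m k)) k)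
  refine ⟨fun ω => F (slot (fun j => t j (ω1 ω)) (u ω)) ω,
    measurable_slot (fun k => (ht k).comp hω1m) hum hFm, ?_⟩
  filter_upwards [hae] with ω hω C hC
  have hθω : Measurable fun z => θ z ω := h.flow.measurable_comp measurable_id measurable_const
  have hsh : ∀ x y, θ x (θ y ω) = θ (x + y) ω := fun x y => h.flow.add_apply x y ω
  have hπω : Measurable fun z => π (θ z ω) := hπ.comp hθω
  refine balance_of_slots (s := s ω) (h.countable ω) (V := fun y => {z | z + π (θ z ω) = y})
    (U := fun z => U0 (θ (π (θ z ω) + z) ω, - π (θ z ω)))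
    (T := fun k y => t k (θ y ω)) (R := fun k x => r k (θ x ω))
    (tgt := fun k y => p k (θ y ω) + y) (f := fun x v => x + f (θ x ω) v)
    ?_ ?_ ?_ ?_ ?_ ?_ ?_ ?_ ?_ ?_ ?_ ?_
    (τ := fun z => z + F (slot (fun j => t j (ω1 (θ z ω))) (u (θ z ω))) (θ z ω)) ?_ ?_ hC
  · exact fun y => measurableSet_eq_fun (measurable_id.add hπω) measurable_const
  · intro x y hxy
    rw [Set.disjoint_left]
    intro z hz hz'
    exact hxy (hz.symm.trans hz')
  · intro z
    refine ⟨z + π (θ z ω), ?_, rfl⟩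
    have := hπs (θ z ω)
    rw [h.mem_shift] at this
    rwa [add_comm]
  · exact fun x => measurable_const.add (hf.comp measurable_prodMk_left)
  · intro k y hy h0
    have := hps k _ h0
    rwa [h.mem_shift] at this
  · exact fun k y hy y' hy' h1 h2 he => hinj k ω y hy y' hy' h1 h2 he
  · intro k y hy h0
    have e : θ (-p k (θ y ω)) (θ (p k (θ y ω) + y) ω) = θ y ω := by rw [hsh]; simp
    show r k (θ (p k (θ y ω) + y) ω) = t k (θ y ω)
    rw [hr]; simp only
    rw [h.received_eq (y := - p k (θ y ω)), e]
    · rw [h.mem_shift]; simpa using hy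
    · rw [e]; simp
    · intro w hw hw0 hwp
      rw [hsh] at hw0 hwp
      rw [h.mem_shift] at hw
      have := hinj k ω _ hw y hy hw0 h0 (by rw [hwp]; simp)
      rw [← add_assoc, add_eq_right] at this
      exact eq_neg_of_add_eq_zero_left this
  · intro k x hx h0
    by_contra! hcon
    refine h0 (h.received_eq_zero fun w hw hwp => ?_)
    rw [hsh] at hwp ⊢
    rw [h.mem_shift] at hw
    by_contra h1
    exact hcon _ hw h1 (by rw [hwp]; simp)
  · intro y hy
    rw [(hω y hy).2.2.1]; exact (hω y hy).1
  · intro x hx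
    rw [(hω x hx).2.2.2]; exact (hω x hx).2.1
  · intro y hy B hB
    have hm : MeasurableSet {w | (θ y ω, w) ∈ W ∧ U0 (θ y ω, w) ∈ B} :=
      (hWω _).inter ((hU0m.comp measurable_prodMk_left) hB)
    rw [(hω y hy).2.2.1, ← hrank _ (hω y hy).1 B hB, hξ, Measure.map_apply (by fun_prop) hm]
    congr 1; ext z
    show (z + π (θ z ω) = y ∧ U0 (θ (π (θ z ω) + z) ω, - π (θ z ω)) ∈ B) ↔
      ((θ y ω, z - y) ∈ W ∧ U0 (θ y ω, z - y) ∈ B)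
    rw [hW, h.mem_cell_shift]
    refine and_congr_right fun hz => ?_
    have e1 : π (θ z ω) + z = y := by rw [add_comm]; exact hz
    have e2 : - π (θ z ω) = z - y := by rw [← hz]; abel
    rw [e1, e2]
  · intro x hx C hC
    have hfx : Measurable fun v => f (θ x ω) v := hf.comp measurable_prodMk_left
    have h1 := hfV (θ x ω) (by rw [hηVu]; exact (hω x hx).2.1)
    have hC' : MeasurableSet {w : Rd d | x + w ∈ C} :=
      (by fun_prop : Measurable fun w : Rd d => x + w) hC
    have h2 := DFunLike.congr_fun h1 {w : Rd d | x + w ∈ C}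
    rw [Measure.map_apply hfx hC', Measure.restrict_apply (hfx hC'), hηVu, hηV,
      Measure.restrict_apply hC', hη, Measure.map_apply (by fun_prop) (hC'.inter (hWω _))] at h2
    rw [(hω x hx).2.2.2, inter_comm]
    refine h2.trans ?_
    congr 1; ext z
    show (x + (z - x) ∈ C ∧ (θ x ω, z - x) ∈ W) ↔ (z + π (θ z ω) = x ∧ z ∈ C)
    rw [hW, h.mem_cell_shift, add_sub_cancel, and_comm]
  · exact measurable_id.add
      ((measurable_slot (fun k => (ht k).comp hω1m) hum hFm).comp hθω)
  · intro y hy z hz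
    have hz' : z + π (θ z ω) = y := hz
    have e1 : π (θ z ω) + z = y := by rw [add_comm]; exact hz'
    have e2 : ω1 (θ z ω) = θ y ω := by rw [hω1]; simp only; rw [hsh, e1]
    have e3 : u (θ z ω) = U0 (θ (π (θ z ω) + z) ω, - π (θ z ω)) := by
      rw [hu]; simp only; rw [e2, e1]
    show z + F (slot (fun j => t j (ω1 (θ z ω))) (u (θ z ω))) (θ z ω) = _
    rw [← e3, e2]
    generalize slot (fun j => t j (θ y ω)) (u (θ z ω)) = k
    rw [hF]; simp only
    have e4 : ω2 k (θ z ω) = θ (p k (θ y ω) + y) ω := by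
      rw [hω2]; simp only; rw [e2, hsh]
    rw [e4, e2, ← add_assoc, ← add_assoc, hz', add_comm y]

end PointField

/-! ### The auxiliary process and the almost sure reduction -/

section final
variable {d : ℕ} {θ : Rd d → Ω → Ω}

lemma Equivariant.apply_singleton {κ : Kernel Ω (Rd d)} (hκ : Equivariant θ κ) (x : Rd d) (ω : Ω)
    (y : Rd d) : κ (θ x ω) {y} = κ ω {y + x} := by
  rw [hκ, Measure.map_apply (by fun_prop) (measurableSet_singleton _)]
  congr 1; ext z; simp [sub_eq_iff_eq_add]

lemma Equivariant.ne_zero_shift {κ : Kernel Ω (Rd d)} (hκ : Equivariant θ κ) (x : Rd d) (ω : Ω) :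
    κ (θ x ω) ≠ 0 ↔ κ ω ≠ 0 := by
  rw [hκ, ne_eq, Measure.map_eq_zero_iff (by fun_prop)]

lemma LocallyFiniteSet.shift {s : Set (Rd d)} (hs : LocallyFiniteSet s) (x : Rd d) :
    LocallyFiniteSet ((fun y => y + x) ⁻¹' s) := by
  intro y
  obtain ⟨U, hU, hf⟩ := hs (y + x)
  refine ⟨(fun y => y + x) ⁻¹' U,
    (by fun_prop : Continuous fun z : Rd d => z + x).continuousAt.preimage_mem_nhds hU, ?_⟩
  exact hf.preimage (f := fun z => z + x) (add_left_injective x).injOn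

/-- Translating the counting measure of a set translates the set. -/
lemma map_count_restrict_sub (s : Set (Rd d)) (hs : MeasurableSet s) (x : Rd d) :
    ((Measure.count : Measure (Rd d)).restrict s).map (fun y => y - x) =
      Measure.count.restrict ((fun y => y + x) ⁻¹' s) := by
  ext C hC
  have hp : Measurable fun y : Rd d => y + x := by fun_prop
  have hm : Measurable fun y : Rd d => y - x := by fun_prop
  rw [Measure.map_apply hm hC, Measure.restrict_apply (hm hC), Measure.restrict_apply hC,
    Measure.count_apply ((hm hC).inter hs), Measure.count_apply (hC.inter (hp hs))]
  congr 1
  have : (fun y : Rd d => y - x) ⁻¹' C ∩ s = (fun y => y + x) '' (C ∩ (fun y => y + x) ⁻¹' s) := by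
    ext z
    simp only [mem_inter_iff, mem_preimage, mem_image]
    constructor
    · rintro ⟨h1, h2⟩; exact ⟨z - x, ⟨h1, by simpa using h2⟩, by simp⟩
    · rintro ⟨w, ⟨h1, h2⟩, rfl⟩; exact ⟨by simpa using h1, h2⟩
  rw [this, (add_left_injective x).encard_image]

/-- If `η` has atoms, the locations of its atoms of mass at least `1 / n` form, for some `n`, an
almost surely non-zero simple point process: some `n` works with positive probability, and
non-vanishing is an invariant event. The process is `η` reweighted by the inverse of its atom
masses, which shows that it is a kernel. -/
lemma exists_atom_process (P : Measure Ω) [IsProbabilityMeasure P]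
    (herg : IsErgodicFlow P θ) (η : Kernel Ω (Rd d)) [IsSFiniteKernel η]
    (hη : Equivariant θ η) (hfin : ∀ ω (n : ℕ), η ω (Metric.closedBall 0 n) < ∞)
    (hatom : ∀ᵐ ω ∂P, ∃ x, η ω {x} ≠ 0) :
    ∃ χ : Kernel Ω (Rd d), IsSFiniteKernel χ ∧ Equivariant θ χ ∧
      (∀ ω, ∃ s, LocallyFiniteSet s ∧ χ ω = Measure.count.restrict s) ∧ ∀ᵐ ω ∂P, χ ω ≠ 0 := by
  have hgm : Measurable fun q : Ω × Rd d => η q.1 {q.2} := by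
    have hset : MeasurableSet {r : (Ω × Rd d) × Rd d | r.2 = r.1.2} :=
      measurableSet_eq_fun measurable_snd (measurable_snd.comp measurable_fst)
    exact Kernel.measurable_kernel_prodMk_left (κ := η.comap Prod.fst measurable_fst) hset
  have hlt : ∀ ω x, η ω {x} ≠ ∞ := by
    intro ω x
    obtain ⟨n, hn⟩ := exists_nat_ge ‖x‖
    refine ((measure_mono ?_).trans_lt (hfin ω n)).ne
    simpa using hn
  set s : ℕ → Ω → Set (Rd d) := fun n ω => {x | (n : ℝ≥0∞)⁻¹ ≤ η ω {x}} with hs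
  have hε : ∀ n : ℕ, (0 : ℝ≥0∞) < (n : ℝ≥0∞)⁻¹ := fun n =>
    ENNReal.inv_pos.2 (ENNReal.natCast_ne_top n)
  have hsm : ∀ n, MeasurableSet {q : Ω × Rd d | (n : ℝ≥0∞)⁻¹ ≤ η q.1 {q.2}} := fun n =>
    measurableSet_le measurable_const hgm
  have hloc : ∀ n ω, LocallyFiniteSet (s n ω) := by
    intro n ω x
    obtain ⟨m, hm⟩ := exists_nat_gt ‖x‖
    refine ⟨Metric.closedBall 0 m, ?_, ?_⟩
    · exact Filter.mem_of_superset (Metric.isOpen_ball.mem_nhds (by simpa using hm))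
        Metric.ball_subset_closedBall
    · have hf := Measure.finite_const_le_meas_of_disjoint_iUnion
        ((η ω).restrict (Metric.closedBall 0 m)) (hε n) (As := fun x : Rd d => {x})
        (fun x => measurableSet_singleton x)
        (fun x y hxy => by simpa [Function.onFun] using hxy)
        (by
          refine ((measure_mono (subset_univ _)).trans_lt ?_).ne
          rw [Measure.restrict_apply_univ]; exact hfin ω m)
      refine hf.subset ?_
      rintro y ⟨hy, hyb⟩
      show _ ≤ (η ω).restrict _ {y}
      rw [Measure.restrict_apply (measurableSet_singleton y),
        inter_eq_left.2 (singleton_subset_iff.2 hyb)]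
      exact hy
  set g : ℕ → Ω → Rd d → ℝ≥0∞ := fun n ω => (s n ω).indicator fun x => (η ω {x})⁻¹ with hg
  have hgm' : ∀ n, Measurable (Function.uncurry (g n)) := fun n =>
    hgm.inv.indicator (hsm n)
  set χ : ℕ → Kernel Ω (Rd d) := fun n => Kernel.withDensity η (g n) with hχ
  have hsfin : ∀ n, IsSFiniteKernel (χ n) := by
    intro n
    refine Kernel.IsSFiniteKernel.withDensity _ fun ω x => ?_
    by_cases hx : x ∈ s n ω
    · rw [hg]; simp only
      rw [indicator_of_mem hx]
      exact ENNReal.inv_ne_top.2 ((hε n).trans_le hx).ne'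
    · rw [hg]; simp only
      rw [indicator_of_notMem hx]; exact ENNReal.zero_ne_top
  have hcount : ∀ n ω, χ n ω = Measure.count.restrict (s n ω) := by
    intro n ω
    have hsn : MeasurableSet (s n ω) := (hloc n ω).countable.measurableSet
    ext C hC
    rw [hχ]; simp only
    rw [Kernel.withDensity_apply' _ (hgm' n), hg]
    simp only
    rw [setLIntegral_indicator hsn, Measure.restrict_apply hC, inter_comm,
      lintegral_countable _ ((hloc n ω).countable.mono inter_subset_right),
      Measure.count_apply (hC.inter hsn), ← ENNReal.tsum_set_one]
    refine tsum_congr fun x => ?_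
    exact ENNReal.inv_mul_cancel ((hε n).trans_le x.2.2).ne' (hlt ω _)
  have hequi : ∀ n, Equivariant θ (χ n) := by
    intro n x ω
    rw [hcount, hcount, map_count_restrict_sub _ (hloc n ω).countable.measurableSet]
    congr 1; ext y
    simp only [hs, mem_ofPred_eq, mem_preimage, hη.apply_singleton]
  have hA : ∀ n, MeasurableSet {ω | χ n ω univ ≠ 0} := fun n =>
    (measurableSet_eq_fun ((χ n).measurable_coe MeasurableSet.univ) measurable_const).compl
  have hex : ∃ n, P {ω | χ n ω univ ≠ 0} ≠ 0 := by
    by_contra! hcon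
    have hall : ∀ᵐ ω ∂P, ∀ n, χ n ω univ = 0 := ae_all_iff.2 fun n => by
      rw [ae_iff]; exact hcon n
    have hbad : ∀ᵐ ω ∂P, False := by
      filter_upwards [hall, hatom] with ω h0 ⟨x, hx⟩
      obtain ⟨n, hn⟩ := ENNReal.exists_inv_nat_lt hx
      have hxs : x ∈ s n ω := hn.le
      have h1 := measure_mono_null (subset_univ {x}) (h0 n)
      rw [hcount, Measure.restrict_apply (measurableSet_singleton x),
        inter_eq_left.2 (singleton_subset_iff.2 hxs), Measure.count_singleton] at h1
      exact one_ne_zero h1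
    obtain ⟨ω, hω⟩ := hbad.exists
    exact hω
  obtain ⟨n, hn⟩ := hex
  refine ⟨χ n, hsfin n, hequi n, fun ω => ⟨_, hloc n ω, hcount n ω⟩, ?_⟩
  have hone := (herg _ (hA n) fun x => by
    ext ω
    simp only [mem_preimage, mem_ofPred_eq, ne_eq, Measure.measure_univ_eq_zero]
    exact (hequi n).ne_zero_shift x ω).resolve_left hn
  have := (mem_ae_iff_prob_eq_one (hA n)).2 hone
  filter_upwards [this] with ω hω h0
  exact hω (by rw [h0]; rfl)

/-- The almost sure hypotheses are made to hold everywhere by passing to an invariant subspace of full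
measure, and the displacement found there is extended measurably to `Ω`. -/
theorem exists_displacement (P : Measure Ω) [IsProbabilityMeasure P]
    (hflow : IsMeasurableFlow θ) (hstat : IsStationary P θ) (herg : IsErgodicFlow P θ)
    (ξ η χ : Kernel Ω (Rd d)) [IsSFiniteKernel ξ] [IsSFiniteKernel η] [IsSFiniteKernel χ]
    (hξ : Equivariant θ ξ) (hη : Equivariant θ η) (hχ : Equivariant θ χ)
    (hdiff : ∀ᵐ ω ∂P, ∀ x, ξ ω {x} = 0)
    (hpt : ∀ᵐ ω ∂P, ∃ s, LocallyFiniteSet s ∧ χ ω = Measure.count.restrict s)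
    (hne : ∀ᵐ ω ∂P, χ ω ≠ 0)
    (hmass : ∫⁻ ω, ξ ω (unitCube d) ∂P = ∫⁻ ω, η ω (unitCube d) ∂P)
    (hfin : ∫⁻ ω, ξ ω (unitCube d) ∂P ≠ ∞) :
    ∃ D : Ω → Rd d, Measurable D ∧ ∀ᵐ ω ∂P, ∀ C : Set (Rd d), MeasurableSet C →
      ξ ω {z | z + D (θ z ω) ∈ C} = η ω C := by
  obtain ⟨S, hSm, hS0, hSinv, hSp⟩ := exists_invariant_subset P hflow hstat
    (p := fun ω => (∀ x, ξ ω {x} = 0) ∧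
      (∃ s, LocallyFiniteSet s ∧ χ ω = Measure.count.restrict s) ∧ χ ω ≠ 0)
    (by filter_upwards [hdiff, hpt, hne] with ω h1 h2 h3 using ⟨h1, h2, h3⟩)
    (by
      rintro x ω ⟨h1, ⟨s, hs, hsχ⟩, h3⟩
      refine ⟨fun y => by rw [hξ.apply_singleton]; exact h1 _, ⟨_, hs.shift x, ?_⟩,
        (hχ.ne_zero_shift x ω).2 h3⟩
      rw [hχ, hsχ, map_count_restrict_sub _ hs.countable.measurableSet])
  have hval := MeasurableEmbedding.subtype_coe hSm
  have hvm : Measurable (Subtype.val : S → Ω) := measurable_subtype_coe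
  set Q : Measure S := P.comap Subtype.val with hQ
  have hQP : Q.map Subtype.val = P := by
    rw [hQ, hval.map_comap, Subtype.range_coe, Measure.restrict_eq_self_of_ae_mem]
    exact mem_ae_iff.2 hS0
  have hQprob : IsProbabilityMeasure Q := ⟨by
    rw [← preimage_univ (f := (Subtype.val : S → Ω)), ← Measure.map_apply hvm MeasurableSet.univ,
      hQP, measure_univ]⟩
  set θS : Rd d → S → S := fun x ω => ⟨θ x ω, (hSinv x ω).2 ω.2⟩ with hθS
  have hθv : ∀ x ω, ((θS x ω : S) : Ω) = θ x ω := fun x ω => rfl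
  have hflowS : IsMeasurableFlow θS :=
    { measurable := Measurable.subtype_mk
        (hflow.measurable_comp measurable_fst (hvm.comp measurable_snd))
      id_eq := by
        ext ω; rw [hθv, hflow.zero_apply]; rfl
      comp := fun x y => by
        ext ω
        rw [Function.comp_apply, hθv, hθv, hθv, hflow.add_apply] }
  have hstatS : IsStationary Q θS := by
    intro x
    have hθm : Measurable (θS x) := hflowS.measurable_apply x
    rw [← hval.comap_map (Q.map (θS x)), Measure.map_map hvm hθm]
    have : (Subtype.val : S → Ω) ∘ θS x = θ x ∘ Subtype.val := rfl
    rw [this, ← Measure.map_map (hflow.measurable_apply x) hvm, hQP, hstat x]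
  have hergS : IsErgodicFlow Q θS := by
    intro A hA hinv
    have hAP : P (Subtype.val '' A) = Q A := by
      rw [← hQP, Measure.map_apply hvm (hval.measurableSet_image.2 hA),
        preimage_image_eq _ Subtype.val_injective]
    rw [← hAP]
    refine herg _ (hval.measurableSet_image.2 hA) fun x => ?_
    ext ω
    constructor
    · rintro ⟨ω', hω', he⟩
      have hωS : ω ∈ S := (hSinv x ω).1 (he ▸ ω'.2)
      refine ⟨⟨ω, hωS⟩, ?_, rfl⟩
      rw [← hinv x]
      have : θS x ⟨ω, hωS⟩ = ω' := Subtype.ext he.symm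
      rwa [mem_preimage, this]
    · rintro ⟨ω', hω', rfl⟩
      rw [← hinv x] at hω'
      exact ⟨θS x ω', hω', rfl⟩
  have hprop : ∀ ω : S, (∀ x, ξ ω {x} = 0) ∧
      (∃ s, LocallyFiniteSet s ∧ χ ω = Measure.count.restrict s) ∧ χ ω ≠ 0 :=
    fun ω => hSp ω ω.2
  choose hd hloc hnz using hprop
  choose s hs hsχ using hloc
  have hF : PointField θS (χ.comap Subtype.val hvm) s :=
    { flow := hflowS
      equi := fun x ω => hχ x ω
      sfin := inferInstance
      eq_count := hsχ
      locFin := hs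
      nonempty := fun ω => by
        rw [nonempty_iff_ne_empty]
        intro he
        exact hnz ω (by rw [hsχ, he, Measure.restrict_empty]) }
  have hI : ∀ κ : Kernel Ω (Rd d), ∫⁻ ω, κ.comap Subtype.val hvm ω (unitCube d) ∂Q =
      ∫⁻ ω, κ ω (unitCube d) ∂P := by
    intro κ
    rw [← hQP, lintegral_map (κ.measurable_coe measurableSet_unitCube) hvm]
    rfl
  obtain ⟨D, hD, hDae⟩ := hF.exists_displacement hstatS hergS (ξ.comap Subtype.val hvm)
    (η.comap Subtype.val hvm) (fun x ω => hξ x ω) (fun x ω => hη x ω) hd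
    (by rw [hI, hI, hmass]) (by rwa [hI])
  obtain ⟨D', hD', hDD⟩ := hval.exists_measurable_extend hD fun _ => inferInstance
  refine ⟨D', hD', ?_⟩
  rw [← hQP]
  refine (hval.ae_map_iff).2 ?_
  filter_upwards [hDae] with ω hω C hC
  rw [← show _ = η ω C from hω C hC]
  show ξ ω _ = ξ ω _
  congr 1; ext z
  show z + D' (θ z ω) ∈ C ↔ z + D (θS z ω) ∈ C
  rw [← hDD]; rfl

end final

end Proof

/-- **Theorem 1 (Last–Thorisson).** Let `ξ` and `η` be jointly stationary and
ergodic random measures on `ℝ^d` with `ξ` diffuse and `0 < λ_ξ = λ_η < ∞`.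
If (a) `η` has a non-zero discrete component, or (b) `η` is diffuse and there
exists an auxiliary simple point process `χ`, then there exists an allocation
balancing `ξ` and `η`. -/
theorem exists_balancing_allocation
    {d : ℕ} {Ω : Type*} [MeasurableSpace Ω] (P : Measure Ω) [IsProbabilityMeasure P]
    (θ : Rd d → Ω → Ω) (ξ η : Ω → Measure (Rd d))
    (hflow : IsMeasurableFlow θ) (hstat : IsStationary P θ) (herg : IsErgodicFlow P θ)
    (hξ : IsRandomMeasure P ξ) (hη : IsRandomMeasure P η)
    (hξinv : IsFlowInvariant P θ ξ) (hηinv : IsFlowInvariant P θ η)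
    (hξdiff : IsDiffuseRM P ξ)
    (hpos : 0 < intensity P ξ) (heq : intensity P ξ = intensity P η)
    (hfin : intensity P η < ∞)
    (hcond :
      (∀ᵐ ω ∂P, ∃ x : Rd d, η ω {x} ≠ 0) ∨
      (IsDiffuseRM P η ∧
        ∃ χ : Ω → Measure (Rd d), IsRandomMeasure P χ ∧ IsFlowInvariant P θ χ ∧
          IsSimplePointProcess P χ ∧ (∀ᵐ ω ∂P, χ ω ≠ 0) ∧ intensity P χ < ∞)) :
    ∃ τ : Ω → Rd d → Option (Rd d), IsAllocation P θ τ ∧ Balances P ξ η τ := by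
  obtain ⟨ξ', _, hξe, hξae, -⟩ := exists_equivariant_version P hflow hstat hξ hξinv
  obtain ⟨η', _, hηe, hηae, hηfin⟩ := exists_equivariant_version P hflow hstat hη hηinv
  obtain ⟨χ, _, hχe, hχpt, hχne⟩ : ∃ χ : ProbabilityTheory.Kernel Ω (Rd d),
      ProbabilityTheory.IsSFiniteKernel χ ∧ Equivariant θ χ ∧
      (∀ᵐ ω ∂P, ∃ s, LocallyFiniteSet s ∧ χ ω = Measure.count.restrict s) ∧
      ∀ᵐ ω ∂P, χ ω ≠ 0 := by
    rcases hcond with hatom | ⟨-, χ, hχ, hχinv, hχs, hχne, -⟩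
    · obtain ⟨χ, h1, h2, h3, h4⟩ := exists_atom_process P herg η' hηe hηfin
        (by filter_upwards [hatom, hηae] with ω h1 h2 using h2 ▸ h1)
      exact ⟨χ, h1, h2, Filter.Eventually.of_forall h3, h4⟩
    · obtain ⟨χ', h1, h2, h3, -⟩ := exists_equivariant_version P hflow hstat hχ hχinv
      refine ⟨χ', h1, h2, ?_, ?_⟩
      · filter_upwards [hχs, h3] with ω h4 h5 using h5 ▸ h4
      · filter_upwards [hχne, h3] with ω h4 h5 using h5 ▸ h4
  have hIξ : ∫⁻ ω, ξ' ω (unitCube d) ∂P = intensity P ξ :=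
    lintegral_congr_ae (by filter_upwards [hξae] with ω h using by rw [h])
  have hIη : ∫⁻ ω, η' ω (unitCube d) ∂P = intensity P η :=
    lintegral_congr_ae (by filter_upwards [hηae] with ω h using by rw [h])
  -- `D ω` is the displacement of the origin; the allocation moves `z` as the origin is moved in the
  -- configuration seen from `z`, which makes it equivariant for every `ω`.
  obtain ⟨D, hD, hDae⟩ := exists_displacement P hflow hstat herg ξ' η' χ hξe hηe hχe
    (by filter_upwards [hξdiff, hξae] with ω h1 h2 using h2 ▸ h1) hχpt hχne
    (by rw [hIξ, hIη, heq]) (by rw [hIξ, heq]; exact hfin.ne)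
  have hsome : Measurable (some : Rd d → Option (Rd d)) := fun _ h => h
  refine ⟨fun ω z => some (z + D (θ z ω)), ⟨?_, ?_⟩, ?_⟩
  · exact hsome.comp (measurable_snd.add
      (hD.comp (hflow.measurable_comp measurable_snd measurable_fst)))
  · refine Filter.Eventually.of_forall fun ω x y => ?_
    show some (x - y + D (θ (x - y) (θ y ω))) = some (x + D (θ x ω) - y)
    rw [hflow.add_apply, sub_add_cancel, sub_add_eq_add_sub]
  · filter_upwards [hDae, hξae, hηae] with ω h1 h2 h3
    refine ⟨by simp, fun C hC => ?_⟩
    rw [← h2, ← h3, ← h1 C hC]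
    congr 1; ext z
    constructor
    · rintro ⟨y, hy, he⟩
      obtain rfl : z + D (θ z ω) = y := Option.some_inj.1 he
      exact hy
    · exact fun hz => ⟨_, hz, rfl⟩

end Paper
end
end

section
/- Let ξ and η be jointly stationary and ergodic random measures on ℝ^d with positive finite intensities, where η is discrete with a.s. locally finite support and its support point process η* also has positive finite intensity. If an allocation τ has appetite α for some α ∈ (0, λ_ξ λ_η^{-1}], then τ is α-balanced: almost surely η{x ∈ ℝ^d : ξ(C^τ(x)) ≠ α η{x}} = 0. -/
/-!
The event that `τ` sends some `ξ`-mass to `∞` is invariant up to null sets, so by ergodicity it has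
probability zero or one (`mass_none_trivial`).

If it has probability one, the third appetite condition says directly that a.s. no atom of `η` is
unsated.

If it has probability zero, the mass transport principle (`mass_transport`) shows that every
half-open lattice cube `Q` receives on average `ξ`-mass `λ_ξ`. Pathwise it receives at most
`α η(Q)` (`received_le`), whose mean is `α λ_η ≤ λ_ξ < ∞`. Two ordered integrable variables with
means in the reverse order coincide a.s., and an unsated atom in `Q` would make the pathwise
inequality strict. As countably many cubes cover the space, a.s. no atom is unsated.

In both cases no atom is unsated, and the second appetite condition says that none is overfull;
since `η` is carried by its atoms, `τ` is `α`-balanced. Half-open cubes may replace the closed cube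
in the intensity because the mean measure of a stationary random measure is a multiple of Lebesgue
measure (`lintegral_latCube`).
-/

open MeasureTheory ENNReal

noncomputable section

namespace Paper

variable {Ω : Type*} [MeasurableSpace Ω]
variable {G : Type*} [MeasurableSpace G] [TopologicalSpace G] [AddCommGroup G]

variable {Ω : Type*} [MeasurableSpace Ω]
variable {G : Type*} [MeasurableSpace G] [TopologicalSpace G] [AddCommGroup G]

/-- The allocation cell `C^τ(x) = {y : τ(y) = x}`. -/
def allocCell (τ : Ω → G → Option G) (ω : Ω) (x : G) : Set G := {y | τ ω y = some x}

/-- The support point process `η*` of a discrete random measure `η`: the simple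
point process with the same support as `η`. -/
def supportPP (η : Ω → Measure G) (ω : Ω) : Measure G :=
  Measure.count.restrict {x | η ω {x} ≠ 0}

/-- The allocation `τ` has appetite `α` with respect to `(ξ, η)`:
(i) a.s. `ξ`-almost no site is allocated to a point outside `supp η ∪ {∞}`;
(ii) a.s. no atom of `η` receives `ξ`-mass more than `α·η{x}`;
(iii) with probability one, it is not the case that simultaneously some
`ξ`-mass is allocated to `∞` and some atom of `η` is unsated. -/
def HasAppetite (P : Measure Ω) (ξ η : Ω → Measure G) (τ : Ω → G → Option G)
    (α : ℝ≥0∞) : Prop :=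
  (∀ᵐ ω ∂P, ξ ω {z | ∃ y, τ ω z = some y ∧ η ω {y} = 0} = 0) ∧
  (∀ᵐ ω ∂P, supportPP η ω {x | α * η ω {x} < ξ ω (allocCell τ ω x)} = 0) ∧
  P {ω | 0 < ξ ω {z | τ ω z = none} ∧
      0 < supportPP η ω {x | ξ ω (allocCell τ ω x) < α * η ω {x}}} = 0

/-! ### Measurability of random masses of random sets -/

/-- For a random measure `ξ` and a jointly measurable set `T`, the `ξ`-mass of the random section
`T_ω` is a random variable up to a null set. The a.s. local finiteness is what makes the
Dynkin-system argument available, applied on balls of radius `n`. -/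
lemma aemeasurable_mass {d : ℕ} {Ω : Type*} [MeasurableSpace Ω] {P : Measure Ω}
    {ξ : Ω → Measure (Rd d)} (hξ : IsRandomMeasure P ξ) {T : Set (Ω × Rd d)}
    (hT : MeasurableSet T) : AEMeasurable (fun ω => ξ ω {z | (ω, z) ∈ T}) P := by
  classical
  let S : Set Ω := {ω | ∀ n : ℕ, ξ ω (Metric.closedBall 0 n) < ∞}
  have hS : MeasurableSet S := by
    have : S = ⋂ n : ℕ, {ω | ξ ω (Metric.closedBall 0 n) < ∞} := by ext; simp [S]
    rw [this]
    exact MeasurableSet.iInter fun n =>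
      measurableSet_lt (hξ.1 _ Metric.isClosed_closedBall.measurableSet) measurable_const
  have hSae : ∀ᵐ ω ∂P, ω ∈ S := by
    filter_upwards [hξ.2] with ω hω n using hω _ (isCompact_closedBall _ _)
  -- `ξ` restricted to a ball, and put to zero on the null set where it is not locally finite.
  let m : ℕ → Ω → Measure (Rd d) := fun n ω =>
    if ω ∈ S then (ξ ω).restrict (Metric.closedBall 0 n) else 0
  have hm : ∀ n, Measurable (m n) := fun n => by
    refine Measurable.ite hS ?_ measurable_const
    refine Measure.measurable_of_measurable_coe _ fun s hs => ?_
    simp_rw [Measure.restrict_apply hs]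
    exact hξ.1 _ (hs.inter Metric.isClosed_closedBall.measurableSet)
  let κ : ℕ → ProbabilityTheory.Kernel Ω (Rd d) := fun n => ⟨m n, hm n⟩
  have hfin : ∀ n ω, IsFiniteMeasure (κ n ω) := fun n ω => by
    change IsFiniteMeasure (m n ω)
    by_cases h : ω ∈ S
    · simp only [m, h, if_true]
      exact ⟨by simpa using h n⟩
    · simp only [m, h, if_false]
      infer_instance
  have hmeas : Measurable fun ω => ⨆ n, κ n ω (Prod.mk ω ⁻¹' T) :=
    Measurable.iSup fun n =>
      ProbabilityTheory.Kernel.measurable_kernel_prodMk_left_of_finite hT (hfin n)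
  refine ⟨_, hmeas, ?_⟩
  filter_upwards [hSae] with ω hω
  have h1 : ∀ n, κ n ω (Prod.mk ω ⁻¹' T)
      = ξ ω ((Prod.mk ω ⁻¹' T) ∩ Metric.closedBall 0 n) := fun n => by
    change m n ω _ = _
    simp only [m, hω, if_true]
    exact Measure.restrict_apply (measurable_prodMk_left hT)
  simp_rw [h1]
  rw [← Monotone.measure_iUnion]
  · rw [← Set.inter_iUnion, Metric.iUnion_closedBall_nat, Set.inter_univ]
    rfl
  · intro a b hab
    exact Set.inter_subset_inter_right _ (Metric.closedBall_subset_closedBall (by exact_mod_cast hab))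

/-! ### Ergodicity for almost invariant events -/

/-- An event that is invariant up to a null set depending on the shift is still trivial: it agrees
a.s. with the strictly invariant event that `θ_x ω` lies in it for Lebesgue-almost every `x`. -/
lemma trivial_of_ae_invariant {d : ℕ} {Ω : Type*} [MeasurableSpace Ω] {P : Measure Ω}
    [IsProbabilityMeasure P] {θ : Rd d → Ω → Ω} (hflow : IsMeasurableFlow θ)
    (herg : IsErgodicFlow P θ) {A : Set Ω} (hA : MeasurableSet A)
    (hinv : ∀ x, ∀ᵐ ω ∂P, (θ x ω ∈ A ↔ ω ∈ A)) : P A = 0 ∨ P A = 1 := by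
  let A' : Set Ω := {ω | ∀ᵐ x ∂(volume : Measure (Rd d)), θ x ω ∈ A}
  have hθ : Measurable fun p : Ω × Rd d => θ p.2 p.1 := hflow.measurable.comp measurable_swap
  have hA' : MeasurableSet A' := by
    have h := measurable_measure_prodMk_left (ν := (volume : Measure (Rd d))) (hθ hA).compl
    exact h (measurableSet_singleton 0)
  have hA'inv : ∀ x, θ x ⁻¹' A' = A' := by
    intro x
    ext ω
    have h1 : ∀ y, θ y (θ x ω) = θ (y + x) ω := fun y => congrFun (hflow.comp y x) ω
    simp only [A', Set.mem_preimage, Set.mem_ofPred_eq, h1]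
    constructor
    · intro h
      have := (quasiMeasurePreserving_add_right (volume : Measure (Rd d)) (-x)).ae h
      simpa using this
    · exact fun h => (quasiMeasurePreserving_add_right (volume : Measure (Rd d)) x).ae h
  have hAA' : A' =ᵐ[P] A := by
    have hms : MeasurableSet {p : Rd d × Ω | θ p.1 p.2 ∈ A ↔ p.2 ∈ A} :=
      MeasurableSet.iff (hflow.measurable hA) (measurable_snd hA)
    have h := (Measure.ae_prod_iff_ae_ae (μ := (volume : Measure (Rd d))) (ν := P) hms).2
      (Filter.Eventually.of_forall hinv)
    have h' := Measure.ae_ae_of_ae_prod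
      (Measure.measurePreserving_swap (μ := P) (ν := (volume : Measure (Rd d)))
        |>.quasiMeasurePreserving.ae h)
    filter_upwards [h'] with ω hω
    refine propext ⟨fun h0 => ?_, fun h0 => ?_⟩
    · obtain ⟨x, hx1, hx2⟩ := (Filter.Eventually.and h0 hω).exists
      exact hx2.1 hx1
    · exact hω.mono fun x hx => hx.2 h0
  rw [← measure_congr hAA']
  exact herg A' hA' hA'inv

/-! ### Half-open cubes and intensities -/

/-- The half-open unit cube with lower corner `k ∈ ℤ^d`. -/
def latCube {d : ℕ} (k : Fin d → ℤ) : Set (Rd d) := {x | ∀ i, ⌊x i⌋ = k i}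

/-- The lattice vector `k ∈ ℤ^d` as a point of `ℝ^d`. -/
def latVec {d : ℕ} (k : Fin d → ℤ) : Rd d := WithLp.toLp 2 fun i => (k i : ℝ)

lemma measurableSet_latCube {d : ℕ} (k : Fin d → ℤ) : MeasurableSet (latCube k) := by
  have : latCube k = ⋂ i, {x : Rd d | ⌊x i⌋ = k i} := by ext; simp [latCube]
  rw [this]
  refine MeasurableSet.iInter fun i => ?_
  have h : Measurable fun x : Rd d => ⌊x i⌋ := Int.measurable_floor.comp (by fun_prop)
  exact h (measurableSet_singleton (k i))

lemma sub_latVec_mem {d : ℕ} (j k : Fin d → ℤ) (x : Rd d) :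
    x - latVec k ∈ latCube j ↔ x ∈ latCube (j + k) := by
  simp [latCube, latVec, sub_eq_iff_eq_add]

lemma mem_latCube_floor {d : ℕ} (x : Rd d) : x ∈ latCube (fun i => ⌊x i⌋) := fun _ => rfl

lemma eq_of_mem_latCube {d : ℕ} {j k : Fin d → ℤ} {x : Rd d} (hj : x ∈ latCube j)
    (hk : x ∈ latCube k) : j = k := funext fun i => (hj i).symm.trans (hk i)

lemma latCube_zero_ae_eq {d : ℕ} :
    (latCube 0 : Set (Rd d)) =ᵐ[volume] unitCube d := by
  have h := Measure.univ_pi_Ico_ae_eq_Icc (μ := fun _ : Fin d => (volume : Measure ℝ))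
    (f := fun _ => 0) (g := fun _ => 1)
  have h2 := (PiLp.volume_preserving_ofLp (Fin d)).quasiMeasurePreserving.preimage_ae_eq h
  have e1 : (latCube 0 : Set (Rd d))
      = WithLp.ofLp ⁻¹' (Set.univ.pi fun _ => Set.Ico (0 : ℝ) 1) := by
    ext x
    simp [latCube, Int.floor_eq_zero_iff]
  have e2 : unitCube d = WithLp.ofLp ⁻¹' (Set.Icc (fun _ => (0 : ℝ)) fun _ => 1) := by
    ext x
    simp [unitCube, Pi.le_def, forall_and]
  rw [e1, e2]
  exact h2

lemma measurePreserving_flow {d : ℕ} {Ω : Type*} [MeasurableSpace Ω] {P : Measure Ω}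
    {θ : Rd d → Ω → Ω} (hflow : IsMeasurableFlow θ) (hstat : IsStationary P θ) (x : Rd d) :
    MeasurePreserving (θ x) P P :=
  ⟨hflow.measurable.comp measurable_prodMk_left, hstat x⟩

/-- The expected mass of every half-open lattice cube is the intensity: the mean measure is a
translation-invariant, locally finite measure, hence a multiple of Lebesgue measure, and so does
not charge the boundary of the closed cube. -/
lemma lintegral_latCube {d : ℕ} {Ω : Type*} [MeasurableSpace Ω] {P : Measure Ω}
    {θ : Rd d → Ω → Ω} (hflow : IsMeasurableFlow θ) (hstat : IsStationary P θ)
    {ξ : Ω → Measure (Rd d)} (hξ : IsRandomMeasure P ξ) (hinv : IsFlowInvariant P θ ξ)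
    (hfin : intensity P ξ < ∞) (k : Fin d → ℤ) :
    ∫⁻ ω, ξ ω (latCube k) ∂P = intensity P ξ := by
  have hmeas : Measurable ξ := Measure.measurable_of_measurable_coe _ hξ.1
  let m : Measure (Rd d) := P.bind ξ
  have hm : ∀ s, MeasurableSet s → m s = ∫⁻ ω, ξ ω s ∂P := fun s hs =>
    Measure.bind_apply hs hmeas.aemeasurable
  have hshift : ∀ x : Rd d, m.map (fun y => y - x) = m := by
    intro x
    ext s hs
    rw [Measure.map_apply (measurable_sub_const x) hs, hm _ (measurable_sub_const x hs), hm _ hs,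
      ← (measurePreserving_flow hflow hstat x).lintegral_comp (hξ.1 s hs)]
    refine lintegral_congr_ae ?_
    filter_upwards [hinv x] with ω hω
    rw [hω, Measure.map_apply (measurable_sub_const x) hs]
  have : m.IsAddLeftInvariant := ⟨fun g => by simpa [sub_eq_add_neg, add_comm] using hshift (-g)⟩
  have hcube : MeasurableSet (unitCube d) := by
    have : unitCube d = ⋂ i, {x : Rd d | x i ∈ Set.Icc (0 : ℝ) 1} := by ext; simp [unitCube]
    rw [this]
    refine MeasurableSet.iInter fun i => ?_
    have h : Measurable fun x : Rd d => x i := by fun_prop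
    exact h measurableSet_Icc
  have hmc : m (unitCube d) = intensity P ξ := hm _ hcube
  have hcpt : IsFiniteMeasureOnCompacts m := by
    refine ⟨fun K hK => ?_⟩
    refine measure_lt_top_of_isCompact_of_isAddLeftInvariant
      {x : Rd d | ∀ i, x i ∈ Set.Ioo (0 : ℝ) 1} ?_ ⟨WithLp.toLp 2 fun _ => 1 / 2, ?_⟩ ?_ hK
    · have : {x : Rd d | ∀ i, x i ∈ Set.Ioo (0 : ℝ) 1}
          = ⋂ i, {x : Rd d | x i ∈ Set.Ioo (0 : ℝ) 1} := by ext; simp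
      rw [this]
      refine isOpen_iInter_of_finite fun i => ?_
      have h : Continuous fun x : Rd d => x i := by fun_prop
      exact isOpen_Ioo.preimage h
    · intro i
      norm_num
    · have hsub : {x : Rd d | ∀ i, x i ∈ Set.Ioo (0 : ℝ) 1} ⊆ unitCube d :=
        fun x hx i => Set.Ioo_subset_Icc_self (hx i)
      exact ((measure_mono hsub).trans_lt (hmc.trans_lt hfin)).ne
  have hae : (latCube 0 : Set (Rd d)) =ᵐ[m] unitCube d := by
    rw [Measure.isAddLeftInvariant_eq_smul m (volume : Measure (Rd d))]
    exact Measure.ae_smul_measure latCube_zero_ae_eq _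
  rw [← hmc, ← measure_congr hae, ← hm _ (measurableSet_latCube k)]
  have h := hshift (latVec k)
  calc m (latCube k) = m ((fun y => y - latVec k) ⁻¹' latCube 0) := by
        congr 1
        ext x
        simp [sub_latVec_mem]
    _ = m.map (fun y => y - latVec k) (latCube 0) :=
        (Measure.map_apply (measurable_sub_const _) (measurableSet_latCube 0)).symm
    _ = m (latCube 0) := by rw [h]

/-! ### Mass transport -/

lemma measurableSet_none {d : ℕ} {Ω : Type*} [MeasurableSpace Ω] {τ : Ω → Rd d → Option (Rd d)}
    (hτ : Measurable fun p : Ω × Rd d => τ p.1 p.2) :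
    MeasurableSet {p : Ω × Rd d | τ p.1 p.2 = none} := by
  have : MeasurableSet ({none} : Set (Option (Rd d))) := by
    change MeasurableSet ((some : Rd d → Option (Rd d)) ⁻¹' {none})
    convert MeasurableSet.empty
    ext
    simp
  exact hτ this

lemma measurableSet_some {d : ℕ} {Ω : Type*} [MeasurableSpace Ω] {τ : Ω → Rd d → Option (Rd d)}
    (hτ : Measurable fun p : Ω × Rd d => τ p.1 p.2) {C : Set (Rd d)} (hC : MeasurableSet C) :
    MeasurableSet {p : Ω × Rd d | ∃ y ∈ C, τ p.1 p.2 = some y} := by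
  have : MeasurableSet (some '' C : Set (Option (Rd d))) := by
    change MeasurableSet ((some : Rd d → Option (Rd d)) ⁻¹' (some '' C))
    rwa [Set.preimage_image_eq _ (Option.some_injective _)]
  convert hτ this using 1
  ext p
  simp [eq_comm]

/-- Expected `ξ`-mass sent by `τ` from the cube at `j` to the cube at `k`. -/
def flux {d : ℕ} {Ω : Type*} [MeasurableSpace Ω] (P : Measure Ω) (ξ : Ω → Measure (Rd d))
    (τ : Ω → Rd d → Option (Rd d)) (j k : Fin d → ℤ) : ℝ≥0∞ :=
  ∫⁻ ω, ξ ω {z | z ∈ latCube j ∧ ∃ y ∈ latCube k, τ ω z = some y} ∂P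

lemma measurableSet_flux {d : ℕ} {Ω : Type*} [MeasurableSpace Ω] {τ : Ω → Rd d → Option (Rd d)}
    (hτ : Measurable fun p : Ω × Rd d => τ p.1 p.2) (j k : Fin d → ℤ) :
    MeasurableSet {p : Ω × Rd d | p.2 ∈ latCube j ∧ ∃ y ∈ latCube k, τ p.1 p.2 = some y} :=
  (measurable_snd (measurableSet_latCube j)).inter (measurableSet_some hτ (measurableSet_latCube k))

/-- Diagonal invariance of the expected flux, from stationarity and equivariance. -/
lemma flux_shift {d : ℕ} {Ω : Type*} [MeasurableSpace Ω] {P : Measure Ω}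
    {θ : Rd d → Ω → Ω} (hflow : IsMeasurableFlow θ) (hstat : IsStationary P θ)
    {ξ : Ω → Measure (Rd d)} (hξ : IsRandomMeasure P ξ) (hinv : IsFlowInvariant P θ ξ)
    {τ : Ω → Rd d → Option (Rd d)} (hτ : IsAllocation P θ τ) (j k l : Fin d → ℤ) :
    flux P ξ τ j k = flux P ξ τ (j + l) (k + l) := by
  have hT := measurableSet_flux hτ.1 j k
  have hmp := measurePreserving_flow hflow hstat (latVec l)
  have hae : AEMeasurable
      (fun ω => ξ ω {z | z ∈ latCube j ∧ ∃ y ∈ latCube k, τ ω z = some y}) P :=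
    aemeasurable_mass hξ hT
  unfold flux
  rw [← hmp.map_eq, lintegral_map' (hmp.map_eq.symm ▸ hae) hmp.measurable.aemeasurable, hmp.map_eq]
  refine lintegral_congr_ae ?_
  filter_upwards [hinv (latVec l), hτ.2] with ω hω hω2
  have hs : MeasurableSet
      {z | z ∈ latCube j ∧ ∃ y ∈ latCube k, τ (θ (latVec l) ω) z = some y} :=
    measurable_prodMk_left (x := θ (latVec l) ω) hT
  rw [hω, Measure.map_apply (measurable_sub_const _) hs]
  congr 1
  ext z
  simp [hω2 z (latVec l), sub_latVec_mem]

/-- Mass transport principle: the expected `ξ`-mass leaving a cube for a finite destination equals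
the expected `ξ`-mass arriving in that cube. -/
lemma mass_transport {d : ℕ} {Ω : Type*} [MeasurableSpace Ω] {P : Measure Ω}
    {θ : Rd d → Ω → Ω} (hflow : IsMeasurableFlow θ) (hstat : IsStationary P θ)
    {ξ : Ω → Measure (Rd d)} (hξ : IsRandomMeasure P ξ) (hinv : IsFlowInvariant P θ ξ)
    {τ : Ω → Rd d → Option (Rd d)} (hτ : IsAllocation P θ τ) (j : Fin d → ℤ) :
    ∫⁻ ω, ξ ω {z | z ∈ latCube j ∧ τ ω z ≠ none} ∂P
      = ∫⁻ ω, ξ ω {z | ∃ y ∈ latCube j, τ ω z = some y} ∂P := by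
  have hsec : ∀ i k ω, MeasurableSet
      {z | z ∈ latCube i ∧ ∃ y ∈ latCube k, τ ω z = some y} := fun i k ω =>
    measurable_prodMk_left (x := ω) (measurableSet_flux hτ.1 i k)
  have hout : ∫⁻ ω, ξ ω {z | z ∈ latCube j ∧ τ ω z ≠ none} ∂P = ∑' k, flux P ξ τ j k := by
    unfold flux
    refine Eq.trans ?_ (lintegral_tsum fun k =>
      aemeasurable_mass hξ (measurableSet_flux hτ.1 j k))
    refine lintegral_congr fun ω => ?_
    refine Eq.trans ?_ (measure_iUnion ?_ fun k => hsec j k ω)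
    · congr 1
      ext z
      simp only [Set.mem_ofPred_eq, Set.mem_iUnion]
      constructor
      · rintro ⟨h1, h2⟩
        obtain ⟨y, hy⟩ := Option.ne_none_iff_exists'.1 h2
        exact ⟨_, h1, y, mem_latCube_floor y, hy⟩
      · rintro ⟨k, h1, y, -, hy⟩
        exact ⟨h1, by simp [hy]⟩
    · intro k k' hkk'
      refine Set.disjoint_left.2 ?_
      rintro z ⟨-, y, hy, h⟩ ⟨-, y', hy', h'⟩
      obtain rfl : y = y' := Option.some_injective _ (h.symm.trans h')
      exact hkk' (eq_of_mem_latCube hy hy')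
  have hin : ∫⁻ ω, ξ ω {z | ∃ y ∈ latCube j, τ ω z = some y} ∂P = ∑' i, flux P ξ τ i j := by
    unfold flux
    refine Eq.trans ?_ (lintegral_tsum fun i =>
      aemeasurable_mass hξ (measurableSet_flux hτ.1 i j))
    refine lintegral_congr fun ω => ?_
    refine Eq.trans ?_ (measure_iUnion ?_ fun i => hsec i j ω)
    · congr 1
      ext z
      simp only [Set.mem_ofPred_eq, Set.mem_iUnion]
      exact ⟨fun h => ⟨_, mem_latCube_floor z, h⟩, fun ⟨_, _, h⟩ => h⟩
    · intro i i' hii'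
      exact Set.disjoint_left.2 fun z h h' => hii' (eq_of_mem_latCube h.1 h'.1)
  rw [hout, hin, ← (Equiv.subLeft (j + j)).tsum_eq]
  refine tsum_congr fun k => ?_
  -- Shifting by `k - j` turns the flux from `j` to `2j - k` into the flux from `k` to `j`.
  rw [flux_shift hflow hstat hξ hinv hτ j _ (k - j)]
  congr 1
  · abel
  · simp only [Equiv.subLeft_apply]
    abel

/-- The event that some `ξ`-mass is allocated to `∞` is trivial. -/
lemma mass_none_trivial {d : ℕ} {Ω : Type*} [MeasurableSpace Ω] {P : Measure Ω}
    [IsProbabilityMeasure P]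
    {θ : Rd d → Ω → Ω} (hflow : IsMeasurableFlow θ) (hstat : IsStationary P θ)
    (herg : IsErgodicFlow P θ)
    {ξ : Ω → Measure (Rd d)} (hξ : IsRandomMeasure P ξ) (hinv : IsFlowInvariant P θ ξ)
    {τ : Ω → Rd d → Option (Rd d)} (hτ : IsAllocation P θ τ) :
    (∀ᵐ ω ∂P, ξ ω {z | τ ω z = none} = 0) ∨ (∀ᵐ ω ∂P, 0 < ξ ω {z | τ ω z = none}) := by
  have hT := measurableSet_none hτ.1
  obtain ⟨g, hg, hfg⟩ : AEMeasurable (fun ω => ξ ω {z | τ ω z = none}) P := aemeasurable_mass hξ hT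
  have hA : MeasurableSet {ω | 0 < g ω} := measurableSet_lt measurable_const hg
  have key := trivial_of_ae_invariant hflow herg hA fun x => by
    have hmp := measurePreserving_flow hflow hstat x
    filter_upwards [hfg, hmp.quasiMeasurePreserving.ae hfg, hinv x, hτ.2] with ω h1 h2 h3 h4
    rw [← h1, ← h2, h3, Measure.map_apply (measurable_sub_const _)
      (show MeasurableSet {z | τ (θ x ω) z = none} from
        measurable_prodMk_left (x := θ x ω) hT)]
    simp [h4]
  rcases key with h | h
  · left
    have : ∀ᵐ ω ∂P, ω ∉ {ω | 0 < g ω} := measure_eq_zero_iff_ae_notMem.1 h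
    filter_upwards [this, hfg] with ω h1 h2
    rw [h2]
    simpa using h1
  · right
    have : ∀ᵐ ω ∂P, ω ∈ {ω | 0 < g ω} := (prob_compl_eq_zero_iff hA).2 h
    filter_upwards [this, hfg] with ω h1 h2
    rw [h2]
    exact h1

/-! ### Mass received by the atoms of a cube -/

lemma countable_atoms {d : ℕ} {ν : Measure (Rd d)} (h : ∃ s : Set (Rd d), s.Countable ∧ ν sᶜ = 0) :
    {x | ν {x} ≠ 0}.Countable := by
  obtain ⟨s, hs, h0⟩ := h
  refine hs.mono fun x hx => ?_
  by_contra hxs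
  exact hx (measure_mono_null (by simpa using hxs) h0)

lemma notMem_of_supportPP {d : ℕ} {Ω : Type*} {η : Ω → Measure (Rd d)} {ω : Ω}
    {B : Set (Rd d)} (h : supportPP η ω B = 0) {x : Rd d} (hx : η ω {x} ≠ 0) : x ∉ B := by
  intro hxB
  have h1 : Measure.count (B ∩ {x | η ω {x} ≠ 0}) = 0 :=
    le_antisymm ((Measure.le_restrict_apply _ _).trans h.le) zero_le
  have h2 := Measure.count_eq_zero_iff.1 h1
  exact (h2 ▸ (⟨hxB, hx⟩ : x ∈ B ∩ {x | η ω {x} ≠ 0}) : x ∈ (∅ : Set (Rd d)))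

/-- If the cells of the atoms of `ν` carry all transported `μ`-mass and none receives more than
its appetite, the mass transported into `Q` is at most `α ν(Q)`, strictly so as soon as some atom
in `Q` is unsated. -/
lemma received_le {d : ℕ} {μ ν : Measure (Rd d)} {t : Rd d → Option (Rd d)} {α : ℝ≥0∞}
    (hc : {x | ν {x} ≠ 0}.Countable)
    (h1 : μ {z | ∃ y, t z = some y ∧ ν {y} = 0} = 0)
    (h2 : ∀ x, ν {x} ≠ 0 → μ {z | t z = some x} ≤ α * ν {x})
    (Q : Set (Rd d)) :
    μ {z | ∃ y ∈ Q, t z = some y} ≤ α * ν Q ∧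
      (α * ν Q ≠ ∞ → ∀ x ∈ Q, μ {z | t z = some x} < α * ν {x} →
        μ {z | ∃ y ∈ Q, t z = some y} < α * ν Q) := by
  let D : Set (Rd d) := {x | ν {x} ≠ 0} ∩ Q
  have hD : D.Countable := hc.mono Set.inter_subset_left
  have : Countable D := hD
  have hle : μ {z | ∃ y ∈ Q, t z = some y} ≤ ∑' x : D, μ {z | t z = some (x : Rd d)} := by
    calc μ {z | ∃ y ∈ Q, t z = some y}
        ≤ μ ({z | ∃ y, t z = some y ∧ ν {y} = 0} ∪ ⋃ x : D, {z | t z = some (x : Rd d)}) := by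
          refine measure_mono ?_
          rintro z ⟨y, hy, hz⟩
          by_cases h : ν {y} = 0
          · exact Or.inl ⟨y, hz, h⟩
          · exact Or.inr (Set.mem_iUnion.2 ⟨⟨y, h, hy⟩, hz⟩)
      _ ≤ μ {z | ∃ y, t z = some y ∧ ν {y} = 0} + μ (⋃ x : D, {z | t z = some (x : Rd d)}) :=
          measure_union_le _ _
      _ ≤ _ := by
          rw [h1, zero_add]
          exact measure_iUnion_le _
  have hterm : ∀ x : D, μ {z | t z = some (x : Rd d)} ≤ α * ν {(x : Rd d)} := fun x =>
    h2 x x.2.1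
  have hsum : ∑' x : D, α * ν {(x : Rd d)} ≤ α * ν Q := by
    rw [ENNReal.tsum_mul_left]
    gcongr
    rw [← measure_biUnion hD (fun a _ b _ hab => by simpa using hab)
      (fun x _ => measurableSet_singleton x)]
    refine measure_mono ?_
    rw [Set.biUnion_of_singleton]
    exact Set.inter_subset_right
  have hle2 := ENNReal.tsum_le_tsum hterm
  refine ⟨hle.trans (hle2.trans hsum), fun hfin x hxQ hlt => ?_⟩
  have hx : ν {x} ≠ 0 := fun h => by simp [h] at hlt
  exact hle.trans_lt ((ENNReal.tsum_lt_tsum (i := (⟨x, hx, hxQ⟩ : D))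
    (ne_top_of_le_ne_top hfin (hle2.trans hsum)) hterm hlt).trans_le hsum)

/-- **Proposition 3 (first part).** If `ξ` and `η` are jointly stationary and
ergodic random measures on `ℝ^d` with positive finite intensities, `η` discrete
with a.s. locally finite support whose support point process `η*` has positive
finite intensity, and the allocation `τ` has appetite `α` for some
`α ∈ (0, λ_ξ λ_η⁻¹]`, then `τ` is `α`-balanced: a.s.
`η{x : ξ(C^τ(x)) ≠ α η{x}} = 0`. -/
theorem alpha_balanced_of_hasAppetite
    {d : ℕ} {Ω : Type*} [MeasurableSpace Ω] (P : Measure Ω) [IsProbabilityMeasure P]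
    (θ : Rd d → Ω → Ω) (ξ η : Ω → Measure (Rd d))
    (hflow : IsMeasurableFlow θ) (hstat : IsStationary P θ) (herg : IsErgodicFlow P θ)
    (hξ : IsRandomMeasure P ξ) (hη : IsRandomMeasure P η)
    (hξinv : IsFlowInvariant P θ ξ) (hηinv : IsFlowInvariant P θ η)
    (hξpos : 0 < intensity P ξ) (hξfin : intensity P ξ < ∞)
    (hηpos : 0 < intensity P η) (hηfin : intensity P η < ∞)
    (hηdisc : IsDiscreteRM P η)
    (hηlocfin : ∀ᵐ ω ∂P, LocallyFiniteSet {x : Rd d | η ω {x} ≠ 0})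
    (hstarpos : 0 < intensity P (supportPP η)) (hstarfin : intensity P (supportPP η) < ∞)
    (τ : Ω → Rd d → Option (Rd d)) (hτ : IsAllocation P θ τ)
    (α : ℝ≥0∞) (hα0 : 0 < α) (hα1 : α ≤ intensity P ξ * (intensity P η)⁻¹)
    (happ : HasAppetite P ξ η τ α) :
    ∀ᵐ ω ∂P, η ω {x : Rd d | ξ ω (allocCell τ ω x) ≠ α * η ω {x}} = 0 := by
  obtain ⟨happ1, happ2, happ3⟩ := happ
  -- It suffices that a.s. no atom is unsated.
  suffices hsat : ∀ᵐ ω ∂P, ∀ x, η ω {x} ≠ 0 → ¬ ξ ω (allocCell τ ω x) < α * η ω {x} by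
    filter_upwards [hsat, happ2, hηdisc] with ω h1 h2 ⟨s, hs, hs0⟩
    have hsub : {x : Rd d | ξ ω (allocCell τ ω x) ≠ α * η ω {x}} ⊆ sᶜ ∪ {x ∈ s | η ω {x} = 0} := by
      intro x hx
      by_cases hxs : x ∈ s
      · refine Or.inr ⟨hxs, ?_⟩
        by_contra h0
        exact hx (le_antisymm (not_lt.1 (notMem_of_supportPP h2 h0)) (not_lt.1 (h1 x h0)))
      · exact Or.inl hxs
    refine measure_mono_null hsub (measure_union_null hs0 ?_)
    rw [← Set.biUnion_of_singleton {x ∈ s | η ω {x} = 0}]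
    exact (measure_biUnion_null_iff (hs.mono (Set.sep_subset _ _))).2 fun x hx => hx.2
  rcases mass_none_trivial hflow hstat herg hξ hξinv hτ with hnone | hnone
  swap
  · have h3 := measure_eq_zero_iff_ae_notMem.1 happ3
    filter_upwards [hnone, h3] with ω h1 h2 x hx
    have : supportPP η ω {x | ξ ω (allocCell τ ω x) < α * η ω {x}} = 0 := by
      by_contra h
      exact h2 ⟨h1, pos_iff_ne_zero.2 h⟩
    exact notMem_of_supportPP this hx
  have hαη : α * intensity P η ≤ intensity P ξ := by
    calc α * intensity P η ≤ intensity P ξ * (intensity P η)⁻¹ * intensity P η := by gcongr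
      _ = intensity P ξ := by
        rw [mul_assoc, ENNReal.inv_mul_cancel hηpos.ne' hηfin.ne, mul_one]
  have hrec : ∀ᵐ ω ∂P, ∀ Q : Set (Rd d),
      ξ ω {z | ∃ y ∈ Q, τ ω z = some y} ≤ α * η ω Q ∧
      (α * η ω Q ≠ ∞ → ∀ x ∈ Q, ξ ω (allocCell τ ω x) < α * η ω {x} →
        ξ ω {z | ∃ y ∈ Q, τ ω z = some y} < α * η ω Q) := by
    filter_upwards [happ1, happ2, hηdisc] with ω h1 h2 h3 Q
    exact received_le (countable_atoms h3) h1
      (fun x hx => not_lt.1 (notMem_of_supportPP h2 hx)) Q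
  have hcube : ∀ k : Fin d → ℤ, ∀ᵐ ω ∂P, ∀ x ∈ latCube k,
      ¬ ξ ω (allocCell τ ω x) < α * η ω {x} := by
    intro k
    -- No mass is lost to `∞`, so the cube receives on average the full intensity of `ξ`.
    have hint : ∫⁻ ω, ξ ω {z | ∃ y ∈ latCube k, τ ω z = some y} ∂P = intensity P ξ := by
      rw [← mass_transport hflow hstat hξ hξinv hτ k,
        ← lintegral_latCube hflow hstat hξ hξinv hξfin k]
      refine lintegral_congr_ae ?_
      filter_upwards [hnone] with ω hω
      refine measure_congr ?_
      filter_upwards [measure_eq_zero_iff_ae_notMem.1 hω] with z hz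
      exact propext ⟨fun h => h.1, fun h => ⟨h, hz⟩⟩
    have hmeas : Measurable fun ω => α * η ω (latCube k) :=
      (hη.1 _ (measurableSet_latCube k)).const_mul α
    have hint2 : ∫⁻ ω, α * η ω (latCube k) ∂P ≤ intensity P ξ := by
      rw [lintegral_const_mul _ (hη.1 _ (measurableSet_latCube k)),
        lintegral_latCube hflow hstat hη hηinv hηfin k]
      exact hαη
    have heq := ae_eq_of_ae_le_of_lintegral_le (hrec.mono fun ω h => (h (latCube k)).1)
      (hint ▸ hξfin.ne) hmeas.aemeasurable (hint2.trans hint.ge)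
    filter_upwards [heq, hrec, ae_lt_top hmeas (hint2.trans_lt hξfin).ne] with ω h1 h2 h3 x hx hlt
    exact ((h2 (latCube k)).2 h3.ne x hx hlt).ne h1
  filter_upwards [ae_all_iff.2 hcube] with ω h x _
  exact h _ x (mem_latCube_floor x)

end Paper
end
end
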